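/- Assume the Riemann Hypothesis. There exists an absolute constant C > 0 such that for all real r and x with r > 1, ln x > 2·ln r, and √x / r ≥ 2657, there exists ã ∈ [(1 − 2·ln r/(ln x + 2·ln r))², (1 + 2·ln r/(ln x − 2·ln r))²] with |N^{ALG}_r(x) − ã·(4x/ln²x)·(ln r − (ln r)/r)| ≤ C·x^{3/4}·r^{1/2}, where N^{ALG}_r(x) = #{(p,q) : p, q prime, √x/r < p ≤ √x and x/(r·p) < q ≤ x/p}. -/

import Mathlib

/-- Prime-pair count of the algorithmically inspired notion: ordered pairs of primes `(p,q)`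
with `√x/r < p ≤ √x` and `x/(r·p) < q ≤ x/p`. -/
noncomputable def NALG (r x : ℝ) : ℕ :=
  Nat.card {pq : ℕ × ℕ // pq.1.Prime ∧ pq.2.Prime ∧
    Real.sqrt x / r < (pq.1 : ℝ) ∧ (pq.1 : ℝ) ≤ Real.sqrt x ∧
    x / (r * (pq.1 : ℝ)) < (pq.2 : ℝ) ∧ (pq.2 : ℝ) ≤ x / (pq.1 : ℝ)}

open Complex Metric Set Finset in
/-- Blaschke-type bound. -/
lemma aux_blaschke {f g : ℂ → ℂ} {n : ℕ} {a : ℕ → ℂ} {R r L : ℝ} (hr : 0 < r) (hrR : r < R)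
    (hg : Differentiable ℂ g) (ha : ∀ i < n, ‖a i‖ ≤ r)
    (hfg : ∀ z, f z = (∏ i ∈ range n, (z - a i)) * g z)
    (hf0 : 1 ≤ ‖f 0‖) (hfL : ∀ z, ‖z‖ ≤ R → ‖f z‖ ≤ Real.exp L) :
    (∀ z, ‖z‖ ≤ R → ‖(∏ i ∈ range n, ((R:ℂ)^2 - (starRingEnd ℂ) (a i) * z) / R) * g z‖ ≤ Real.exp L)
    ∧ (R / r) ^ n ≤ ‖(∏ i ∈ range n, ((R:ℂ)^2 - (starRingEnd ℂ) (a i) * 0) / R) * g 0‖ := by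
  have hR : 0 < R := hr.trans hrR
  constructor
  · intro z hz
    have hd : Differentiable ℂ (fun z => (∏ i ∈ range n, ((R:ℂ)^2 - (starRingEnd ℂ) (a i) * z) / R) * g z) := by
      refine Differentiable.mul ?_ hg
      refine Differentiable.fun_finsetProd ?_
      intro i _
      fun_prop
    refine Complex.norm_le_of_forall_mem_frontier_norm_le (U := ball (0:ℂ) R) isBounded_ball
      hd.diffContOnCl ?_ (z := z) ?_
    · intro w hw
      rw [frontier_ball _ hR.ne', mem_sphere_zero_iff_norm] at hw
      refine le_trans (le_of_eq ?_) (hfL w hw.le)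
      rw [hfg, norm_mul, norm_mul, norm_prod, norm_prod]
      congr 1
      refine Finset.prod_congr rfl fun i _ => ?_
      have h1 : (R:ℂ)^2 = (starRingEnd ℂ) w * w := by
        rw [mul_comm, Complex.mul_conj, Complex.normSq_eq_norm_sq, hw]; push_cast; rfl
      rw [h1, ← sub_mul, norm_div, norm_mul, hw, ← map_sub, Complex.norm_conj]
      simp [abs_of_pos hR, hR.ne']
    · rw [closure_ball _ hR.ne', mem_closedBall_zero_iff]; exact hz
  · rw [hfg, norm_mul, norm_prod] at hf0
    rw [norm_mul, norm_prod]
    have h1 : ∏ i ∈ range n, ‖(0:ℂ) - a i‖ ≤ r ^ n := by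
      calc _ ≤ ∏ i ∈ range n, r := Finset.prod_le_prod (fun _ _ => norm_nonneg _)
            (fun i hi => by simpa using ha i (Finset.mem_range.1 hi))
        _ = r ^ n := by simp
    have h2 : ∏ i ∈ range n, ‖((R:ℂ)^2 - (starRingEnd ℂ) (a i) * 0) / R‖ = R ^ n := by
      have : ∀ i ∈ range n, ‖((R:ℂ)^2 - (starRingEnd ℂ) (a i) * 0) / R‖ = R := by
        intro i _
        rw [mul_zero, sub_zero, norm_div, norm_pow]
        simp [abs_of_pos hR]
        field_simp
      rw [Finset.prod_congr rfl this]; simp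
    rw [h2, div_pow, div_le_iff₀ (by positivity)]
    have := mul_le_mul_of_nonneg_right h1 (norm_nonneg (g 0))
    have h3 : 1 ≤ r ^ n * ‖g 0‖ := hf0.trans this
    nlinarith [pow_pos hR n]

open Complex Metric Set Finset in
lemma aux_zeros {f : ℂ → ℂ} {R r L : ℝ} (hr : 0 < r) (hrR : r < R) (hf : Differentiable ℂ f)
    (hf0 : 1 ≤ ‖f 0‖) (hfL : ∀ z, ‖z‖ ≤ R → ‖f z‖ ≤ Real.exp L) :
    ∃ n : ℕ, ∃ a : ℕ → ℂ, ∃ g : ℂ → ℂ, Differentiable ℂ g ∧ (∀ i < n, ‖a i‖ ≤ r) ∧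
      (∀ z, f z = (∏ i ∈ range n, (z - a i)) * g z) ∧ (∀ z, ‖z‖ ≤ r → g z ≠ 0) ∧
      (n : ℝ) * Real.log (R / r) ≤ L := by
  classical
  have hR : 0 < R := hr.trans hrR
  let P : ℕ → Prop := fun n => ∃ a : ℕ → ℂ, ∃ g : ℂ → ℂ, Differentiable ℂ g ∧ (∀ i < n, ‖a i‖ ≤ r) ∧
      (∀ z, f z = (∏ i ∈ range n, (z - a i)) * g z)
  have hlog : 0 < Real.log (R / r) := Real.log_pos (by rwa [one_lt_div hr])
  have hb : ∀ n, P n → (n : ℝ) * Real.log (R / r) ≤ L := by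
    rintro n ⟨a, g, hg, ha, hfg⟩
    obtain ⟨h1, h2⟩ := aux_blaschke hr hrR hg ha hfg hf0 hfL
    have h3 := h2.trans (h1 0 (by simpa using hR.le))
    rw [← Real.log_pow]
    rw [← Real.log_exp L]
    exact Real.log_le_log (by positivity) h3
  have h0 : P 0 := ⟨fun _ => 0, f, hf, by simp, by simp⟩
  obtain ⟨N, hN⟩ := exists_nat_gt (L / Real.log (R / r))
  have hex : ∃ n, ¬ P n := ⟨N, fun h => by
    have := hb N h
    rw [div_lt_iff₀ hlog] at hN
    linarith⟩
  have hs := Nat.find_spec hex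
  set m := Nat.find hex with hm
  have hm0 : m ≠ 0 := by
    intro h; rw [h] at hs; exact hs h0
  obtain ⟨k, hk⟩ := Nat.exists_eq_succ_of_ne_zero hm0
  have hPk : P k := by
    by_contra h
    have := Nat.find_min' hex h
    omega
  have hPk' := hPk
  obtain ⟨a, g, hg, ha, hfg⟩ := hPk
  refine ⟨k, a, g, hg, ha, hfg, ?_, hb k hPk'⟩
  intro w hw hgw
  apply hs
  rw [hk]
  refine ⟨fun i => if i < k then a i else w, dslope g w, ?_, ?_, ?_⟩
  · rw [← differentiableOn_univ]
    rw [Complex.differentiableOn_dslope Filter.univ_mem]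
    exact hg.differentiableOn
  · intro i hi
    by_cases h : i < k
    · simp only [h, if_true]; exact ha i h
    · simp only [h, if_false]; exact hw
  · intro z
    rw [Finset.prod_range_succ, hfg]
    have h1 : ∏ i ∈ range k, (z - if i < k then a i else w) = ∏ i ∈ range k, (z - a i) :=
      Finset.prod_congr rfl fun i hi => by simp [Finset.mem_range.1 hi]
    rw [h1]
    have h2 := sub_smul_dslope g w z
    rw [hgw, sub_zero, smul_eq_mul] at h2
    simp only [lt_irrefl, if_false]
    rw [← h2]; ring

open Complex Metric Set Finset in
/-- log-derivative derivative bound for zero free functions -/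
lemma aux_zerofree {B : ℂ → ℂ} {L r : ℝ} (hL : 0 < L) (hB : Differentiable ℂ B) (hr : 0 < r)
    (hne : ∀ z, ‖z‖ < r → B z ≠ 0) (hB0 : 1 ≤ ‖B 0‖) (hBL : ∀ z, ‖z‖ < r → ‖B z‖ ≤ Real.exp L)
    {d : ℝ} (hd : 0 < d) {z : ℂ} (hz : ‖z‖ ≤ r - 2 * d) :
    ‖deriv (logDeriv B) z‖ ≤ 4 * L * r / d ^ 3 := by
  have hBd : DifferentiableOn ℂ (deriv B) univ := hB.differentiableOn.deriv isOpen_univ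
  have hld : DifferentiableOn ℂ (logDeriv B) (ball 0 r) := by
    intro w hw
    have : B w ≠ 0 := hne w (by simpa using hw)
    refine DifferentiableAt.differentiableWithinAt ?_
    exact ((hBd w trivial).differentiableAt Filter.univ_mem).div (hB w) this
  obtain ⟨h, hh⟩ := hld.isExactOn_ball
  have hconst : ∀ w ∈ ball (0:ℂ) r, B w = B 0 * Complex.exp (h w - h 0) := by
    have hc : ∀ w ∈ ball (0:ℂ) r, HasDerivAt (fun w => B w * Complex.exp (- h w)) 0 w := by
      intro w hw
      have hBw : B w ≠ 0 := hne w (by simpa using hw)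
      have := (hB w).hasDerivAt.mul (hh w hw).neg.cexp
      refine this.congr_deriv ?_
      simp only [logDeriv_apply]
      field_simp
      ring
    have h2 : ∀ w ∈ ball (0:ℂ) r, B w * Complex.exp (- h w) = B 0 * Complex.exp (- h 0) := by
      intro w hw
      refine (convex_ball (0:ℂ) r).is_const_of_fderivWithin_eq_zero (𝕜 := ℂ)
        (f := fun w => B w * Complex.exp (- h w)) ?_ ?_ hw (mem_ball_self hr)
      · intro v hv; exact (hc v hv).differentiableAt.differentiableWithinAt
      · intro v hv
        rw [fderivWithin_of_isOpen isOpen_ball hv]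
        have := (hc v hv).hasFDerivAt.fderiv
        rw [this]; ext; simp
    intro w hw
    have := h2 w hw
    calc B w = B w * Complex.exp (- h w) * Complex.exp (h w) := by
          rw [mul_assoc, ← Complex.exp_add]; simp
      _ = _ := by rw [this, mul_assoc, ← Complex.exp_add]; ring_nf
  have hdh : DifferentiableOn ℂ (fun w => h w - h 0) (ball 0 r) := fun w hw =>
    ((hh w hw).sub_const _).differentiableAt.differentiableWithinAt
  have hbc : ∀ w, ‖w‖ ≤ r - d → ‖h w - h 0‖ ≤ 2 * L * r / d := by
    intro w hw
    have hwb : w ∈ ball (0:ℂ) r := by simp; linarith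
    have := Complex.borelCaratheodory_zero (f := fun w => h w - h 0) hL hdh ?_ hr hwb (by simp)
    · refine this.trans ?_
      have : ‖w‖ ≤ r := by linarith
      have : d ≤ r - ‖w‖ := by linarith
      gcongr
    · intro v hv
      have h1 := hBL v (by simpa using hv)
      rw [hconst v hv, norm_mul, Complex.norm_exp] at h1
      have h2 : Real.exp ((h v - h 0).re) ≤ Real.exp L := by
        refine le_trans ?_ h1
        exact le_mul_of_one_le_left (Real.exp_pos _).le hB0
      exact Real.exp_le_exp.1 h2
  have hder : deriv (logDeriv B) z = iteratedDeriv 2 (fun w => h w - h 0) z := by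
    rw [iteratedDeriv_succ, iteratedDeriv_one]
    refine Filter.EventuallyEq.deriv_eq ?_
    have : z ∈ ball (0:ℂ) r := by simp; linarith
    filter_upwards [isOpen_ball.mem_nhds this] with w hw
    exact ((hh w hw).sub_const _).deriv.symm
  rw [hder]
  have hsub : closedBall z d ⊆ ball 0 r := by
    intro w hw
    rw [mem_closedBall, dist_eq_norm] at hw
    have := norm_le_norm_add_norm_sub z w
    rw [norm_sub_rev] at this
    simp; linarith
  have := Complex.norm_iteratedDeriv_le_of_forall_mem_sphere_norm_le (f := fun w => h w - h 0) (c := z)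
    (C := 2 * L * r / d) 2 hd ?_ ?_
  · refine this.trans (le_of_eq ?_)
    simp [Nat.factorial]; field_simp; norm_num
  · refine DifferentiableOn.diffContOnCl ?_
    rw [closure_ball _ hd.ne']
    exact hdh.mono hsub
  · intro w hw
    rw [mem_sphere, dist_eq_norm] at hw
    have := norm_le_norm_add_norm_sub z w
    rw [norm_sub_rev] at this
    exact hbc w (by linarith)


open Complex Metric Set Finset in
lemma local_bound : ∃ K : ℝ, 0 < K ∧ ∀ (f : ℂ → ℂ) (L : ℝ), 0 < L → Differentiable ℂ f →
    1 ≤ ‖f 0‖ → (∀ z, ‖z‖ ≤ 19/10 → ‖f z‖ ≤ Real.exp L) →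
    ∃ n : ℕ, ∃ a : ℕ → ℂ, (∀ i < n, f (a i) = 0) ∧ (n : ℝ) ≤ K * L ∧
      ∀ z, ‖z‖ ≤ 16/10 → f z ≠ 0 →
        ‖deriv (logDeriv f) z‖ ≤ K * L + ∑ i ∈ range n, 1 / ‖z - a i‖ ^ 2 := by
  have hlog : 0 < Real.log ((19/10:ℝ) / (18/10)) := Real.log_pos (by norm_num)
  set k := Real.log ((19/10:ℝ) / (18/10)) with hk
  refine ⟨7200 + 1000 / k, by positivity, ?_⟩
  intro f L hL hf hf0 hfL
  obtain ⟨n, a, g, hg, ha, hfg, hgne, hn⟩ := aux_zeros (r := 18/10) (R := 19/10) (by norm_num) (by norm_num) hf hf0 hfL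
  have hn' : (n:ℝ) ≤ L / k := by rw [le_div_iff₀ hlog]; exact hn
  obtain ⟨hb1, hb2⟩ := aux_blaschke (r := 18/10) (R := 19/10) (by norm_num) (by norm_num) hg ha hfg hf0 hfL
  set q : ℕ → ℂ → ℂ := fun i z => (((19/10:ℝ):ℂ)^2 - (starRingEnd ℂ) (a i) * z) / ((19/10:ℝ):ℂ) with hq
  set B : ℂ → ℂ := fun z => (∏ i ∈ range n, q i z) * g z with hBdef
  have hqd : ∀ i, Differentiable ℂ (q i) := fun i => by simp only [hq]; fun_prop
  have hnum : ∀ i < n, ∀ z : ℂ, ‖z‖ ≤ 18/10 → (1/10:ℝ) ≤ ‖((19/10:ℝ):ℂ)^2 - (starRingEnd ℂ) (a i) * z‖ := by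
    intro i hi z hz
    have h1 : ‖(starRingEnd ℂ) (a i) * z‖ ≤ 18/10 * (18/10) := by
      rw [norm_mul, Complex.norm_conj]
      have := ha i hi
      gcongr
    have h2 : ‖((19/10:ℝ):ℂ)^2‖ = (19/10)^2 := by
      rw [norm_pow, Complex.norm_real]; norm_num
    have h3 := norm_sub_norm_le (((19/10:ℝ):ℂ)^2) ((starRingEnd ℂ) (a i) * z)
    rw [h2] at h3
    norm_num at h1 h3 ⊢
    linarith
  have hqne : ∀ i < n, ∀ z : ℂ, ‖z‖ ≤ 18/10 → q i z ≠ 0 := by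
    intro i hi z hz
    have := hnum i hi z hz
    refine div_ne_zero ?_ ?_
    · intro h; rw [h] at this; norm_num at this
    · norm_num
  have hpd : Differentiable ℂ (fun z => ∏ i ∈ range n, q i z) :=
    Differentiable.fun_finsetProd fun i _ => hqd i
  have hBd : Differentiable ℂ B := hpd.mul hg
  have hBne : ∀ z, ‖z‖ < 18/10 → B z ≠ 0 := by
    intro z hz
    refine mul_ne_zero ?_ (hgne z hz.le)
    exact Finset.prod_ne_zero_iff.2 fun i hi => hqne i (Finset.mem_range.1 hi) z hz.le
  have hB0 : 1 ≤ ‖B 0‖ := by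
    refine le_trans ?_ hb2
    exact one_le_pow₀ (by norm_num)
  refine ⟨n, a, ?_, ?_, ?_⟩
  · intro i hi
    rw [hfg, Finset.prod_eq_zero (Finset.mem_range.2 hi) (sub_self _), zero_mul]
  · refine hn'.trans ?_
    rw [div_eq_mul_inv, mul_comm]
    refine mul_le_mul_of_nonneg_right ?_ hL.le
    rw [div_eq_mul_inv]
    have := inv_pos.2 hlog
    linarith
  intro z hz hfz
  have hzf := aux_zerofree hL hBd (r := 18/10) (by norm_num) hBne hB0 (fun z hz => hb1 z (by linarith))
    (d := 1/10) (by norm_num) (z := z) (by norm_num at hz ⊢; linarith)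
  -- identity near z
  have hne_open : ∀ᶠ w in nhds z, f w ≠ 0 ∧ ‖w‖ < 18/10 := by
    refine (hf.continuous.continuousAt.eventually_ne hfz).and ?_
    exact (continuous_norm.tendsto z).eventually_lt_const (by linarith)
  have hid : ∀ w, f w ≠ 0 → ‖w‖ < 18/10 → logDeriv f w =
      logDeriv B w + ∑ i ∈ range n, (1 / (w - a i) +
        (starRingEnd ℂ) (a i) / (((19/10:ℝ):ℂ)^2 - (starRingEnd ℂ) (a i) * w)) := by
    intro w hfw hw
    have hP : ∀ i ∈ range n, (w - a i) ≠ 0 := by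
      rw [hfg] at hfw
      exact Finset.prod_ne_zero_iff.1 (left_ne_zero_of_mul hfw)
    have hgw : g w ≠ 0 := hgne w hw.le
    have e1 : logDeriv f w = ∑ i ∈ range n, 1 / (w - a i) + logDeriv g w := by
      have : f = fun z => (∏ i ∈ range n, (z - a i)) * g z := funext hfg
      rw [this, logDeriv_mul w (Finset.prod_ne_zero_iff.2 hP) hgw
        (DifferentiableAt.fun_finsetProd fun i _ => by fun_prop) (hg w), logDeriv_prod hP (fun i _ => by fun_prop)]
      congr 1
      refine Finset.sum_congr rfl fun i _ => ?_
      simp [logDeriv_apply]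
    have e2 : logDeriv B w = ∑ i ∈ range n, (- ((starRingEnd ℂ) (a i) / (((19/10:ℝ):ℂ)^2 - (starRingEnd ℂ) (a i) * w))) + logDeriv g w := by
      have hqn : ∀ i ∈ range n, q i w ≠ 0 := fun i hi => hqne i (Finset.mem_range.1 hi) w hw.le
      rw [hBdef, logDeriv_mul w (Finset.prod_ne_zero_iff.2 hqn) hgw (hpd w) (hg w),
        logDeriv_prod hqn (fun i _ => hqd i w)]
      congr 1
      refine Finset.sum_congr rfl fun i hi => ?_
      have hder : HasDerivAt (q i) ((- (starRingEnd ℂ) (a i)) / ((19/10:ℝ):ℂ)) w := by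
        have := (((hasDerivAt_id w).const_mul ((starRingEnd ℂ) (a i))).const_sub (((19/10:ℝ):ℂ)^2)).div_const ((19/10:ℝ):ℂ)
        simpa [hq] using this
      rw [logDeriv_apply, hder.deriv]
      have h19 : ((19/10:ℝ):ℂ) ≠ 0 := by norm_num
      simp only [hq]
      rw [div_div_div_cancel_right₀ h19, neg_div]
    rw [e1, e2, Finset.sum_add_distrib, Finset.sum_neg_distrib]
    ring
  have hPz : ∀ i ∈ range n, (z - a i) ≠ 0 := by
    have := hfz
    rw [hfg] at this
    exact Finset.prod_ne_zero_iff.1 (left_ne_zero_of_mul this)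
  have hDz : ∀ i ∈ range n, ((19/10:ℝ):ℂ)^2 - (starRingEnd ℂ) (a i) * z ≠ 0 := by
    intro i hi h
    have := hnum i (Finset.mem_range.1 hi) z (by linarith)
    rw [h] at this; norm_num at this
  have hsumder : HasDerivAt (fun w => ∑ i ∈ range n, (1 / (w - a i) +
        (starRingEnd ℂ) (a i) / (((19/10:ℝ):ℂ)^2 - (starRingEnd ℂ) (a i) * w)))
      (∑ i ∈ range n, (-1 / (z - a i)^2 + ((starRingEnd ℂ) (a i))^2 / (((19/10:ℝ):ℂ)^2 - (starRingEnd ℂ) (a i) * z)^2)) z := by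
    refine HasDerivAt.fun_sum fun i hi => ?_
    refine HasDerivAt.add ?_ ?_
    · have := ((hasDerivAt_id z).sub_const (a i)).fun_inv (hPz i hi)
      simpa [one_div] using this
    · have h1 := ((hasDerivAt_id z).const_mul ((starRingEnd ℂ) (a i))).const_sub (((19/10:ℝ):ℂ)^2)
      have := (h1.inv (hDz i hi)).const_mul ((starRingEnd ℂ) (a i))
      simp only [id, mul_one, neg_neg] at this
      refine (this.congr_deriv ?_)
      ring
  have hBld : DifferentiableAt ℂ (logDeriv B) z := by
    have hd : DifferentiableOn ℂ (deriv B) univ := hBd.differentiableOn.deriv isOpen_univ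
    exact ((hd z trivial).differentiableAt Filter.univ_mem).div (hBd z) (hBne z (by linarith))
  have hder : deriv (logDeriv f) z = deriv (logDeriv B) z + (∑ i ∈ range n, (-1 / (z - a i)^2 + ((starRingEnd ℂ) (a i))^2 / (((19/10:ℝ):ℂ)^2 - (starRingEnd ℂ) (a i) * z)^2)) := by
    have : logDeriv f =ᶠ[nhds z] fun w => logDeriv B w + ∑ i ∈ range n, (1 / (w - a i) +
        (starRingEnd ℂ) (a i) / (((19/10:ℝ):ℂ)^2 - (starRingEnd ℂ) (a i) * w)) := by
      filter_upwards [hne_open] with w hw using hid w hw.1 hw.2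
    rw [this.deriv_eq]
    exact (hBld.hasDerivAt.add hsumder).deriv
  rw [hder]
  refine (norm_add_le _ _).trans ?_
  have hterm : ∀ i ∈ range n, ‖(-1 / (z - a i)^2 + ((starRingEnd ℂ) (a i))^2 / (((19/10:ℝ):ℂ)^2 - (starRingEnd ℂ) (a i) * z)^2)‖ ≤ 1 / ‖z - a i‖^2 + 1000 := by
    intro i hi
    refine (norm_add_le _ _).trans ?_
    rw [norm_div, norm_div, norm_pow, norm_pow, norm_pow, norm_neg, norm_one, Complex.norm_conj]
    gcongr
    have h1 := hnum i (Finset.mem_range.1 hi) z (by linarith)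
    have h2 := ha i (Finset.mem_range.1 hi)
    calc _ ≤ (18/10:ℝ)^2 / (1/10)^2 := by gcongr
      _ ≤ 1000 := by norm_num
  have hsum := (norm_sum_le _ _).trans (Finset.sum_le_sum hterm)
  have hsum' : ∑ i ∈ range n, (1 / ‖z - a i‖^2 + (1000:ℝ)) = ∑ i ∈ range n, 1 / ‖z - a i‖^2 + (n:ℝ) * 1000 := by
    rw [Finset.sum_add_distrib]
    simp only [Finset.sum_const, Finset.card_range, nsmul_eq_mul]
  rw [hsum'] at hsum
  have h4 : 4 * L * (18/10) / (1/10:ℝ)^3 = 7200 * L := by ring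
  rw [h4] at hzf
  have h5 : (7200 + 1000 / k) * L = 7200 * L + 1000 * (L / k) := by ring
  rw [h5]
  have : (n:ℝ) * 1000 ≤ 1000 * (L/k) := by linarith
  linarith


noncomputable def zf : ℂ → ℂ := fun s => if s = 1 then 1 else (s - 1) * riemannZeta s

lemma zf_of_ne {s : ℂ} (h : s ≠ 1) : zf s = (s - 1) * riemannZeta s := by simp [zf, h]

open Filter Topology in
lemma zf_diff : Differentiable ℂ zf := by
  have hne : ∀ s : ℂ, s ≠ 1 → DifferentiableAt ℂ zf s := by
    intro s hs
    have h1 : DifferentiableAt ℂ (fun s => (s - 1) * riemannZeta s) s :=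
      (by fun_prop : DifferentiableAt ℂ (fun s : ℂ => s - 1) s).mul (differentiableAt_riemannZeta hs)
    refine h1.congr_of_eventuallyEq ?_
    filter_upwards [isOpen_ne.mem_nhds hs] with w hw using zf_of_ne hw
  intro s
  by_cases hs : s = 1
  · subst hs
    refine (Complex.analyticAt_of_differentiable_on_punctured_nhds_of_continuousAt ?_ ?_).differentiableAt
    · filter_upwards [self_mem_nhdsWithin] with w hw using hne w hw
    · rw [continuousAt_iff_punctured_nhds]
      have : zf 1 = 1 := by simp [zf]
      rw [this]
      refine riemannZeta_residue_one.congr' ?_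
      filter_upwards [self_mem_nhdsWithin] with w hw using (zf_of_ne hw).symm
  · exact hne s hs

lemma zf_ne (hRH : RiemannHypothesis) {s : ℂ} (hs : 1/2 < s.re) : zf s ≠ 0 := by
  by_cases h1 : s = 1
  · simp [zf, h1]
  · rw [zf_of_ne h1]
    refine mul_ne_zero (sub_ne_zero.2 h1) fun h => ?_
    have := hRH s h ?_ h1
    · linarith
    · rintro ⟨n, rfl⟩
      have : ((-2 : ℂ) * ((n:ℂ) + 1)).re = -2 * ((n:ℝ) + 1) := by simp
      rw [this] at hs
      have : (0:ℝ) ≤ n := n.cast_nonneg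
      linarith

lemma zf_lower (T : ℝ) : 1/3 ≤ ‖zf (2 + T * Complex.I)‖ := by
  have hne : (2 + T * Complex.I : ℂ) ≠ 1 := by
    intro h; have := congrArg Complex.re h; simp at this
  have hre : (2 + T * Complex.I : ℂ).re = 2 := by simp
  rw [zf_of_ne hne, norm_mul]
  have h1 : 1 ≤ ‖(2 + T * Complex.I - 1 : ℂ)‖ := by
    have := Complex.abs_re_le_norm (2 + T * Complex.I - 1 : ℂ)
    simp at this
    norm_num at this
    exact this
  have h2 : 1/3 ≤ ‖riemannZeta (2 + T * Complex.I)‖ := by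
    rw [zeta_eq_tsum_one_div_nat_cpow (by rw [hre]; norm_num)]
    have hn : ∀ n : ℕ, ‖(1:ℂ) / (n:ℂ) ^ (2 + T * Complex.I : ℂ)‖ = 1 / (n:ℝ)^2 := by
      intro n
      rcases Nat.eq_zero_or_pos n with rfl | hn
      · have : (2 + T * Complex.I : ℂ) ≠ 0 := by
          intro h; have := congrArg Complex.re h; simp at this
        simp [Complex.zero_cpow this]
      · rw [norm_div, Complex.norm_natCast_cpow_of_pos hn, hre]; simp
    have hs : Summable (fun n : ℕ => ‖(1:ℂ) / (n:ℂ) ^ (2 + T * Complex.I : ℂ)‖) := by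
      simp_rw [hn]; exact hasSum_zeta_two.summable
    have hs' := hs.of_norm
    rw [hs'.tsum_eq_add_tsum_ite 1]
    have hb : ‖∑' n : ℕ, ite (n = 1) 0 ((1:ℂ) / (n:ℂ) ^ (2 + T * Complex.I : ℂ))‖ ≤ Real.pi^2/6 - 1 := by
      have hz := hasSum_zeta_two
      have h3 := hz.summable.tsum_eq_add_tsum_ite 1
      rw [hz.tsum_eq] at h3
      have h4 : Summable (fun n : ℕ => ite (n = 1) 0 (1 / (n:ℝ)^2)) := by
        refine hz.summable.of_nonneg_of_le (fun n => ?_) (fun n => ?_)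
        · split_ifs <;> positivity
        · split_ifs
          · positivity
          · exact le_rfl
      have h5 := tsum_of_norm_bounded h4.hasSum (f := fun n : ℕ => ite (n = 1) 0 ((1:ℂ) / (n:ℂ) ^ (2 + T * Complex.I : ℂ))) (fun n => by
        split_ifs
        · simp
        · rw [hn])
      refine h5.trans ?_
      simp at h3 ⊢
      linarith
    have hpi : Real.pi ^ 2 / 6 - 1 ≤ 2/3 := by
      have := Real.pi_lt_d2
      have h0 := Real.pi_pos
      nlinarith
    have h6 := norm_sub_norm_le (1:ℂ) (-∑' n : ℕ, ite (n = 1) 0 ((1:ℂ) / (n:ℂ) ^ (2 + T * Complex.I : ℂ)))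
    rw [norm_neg, norm_one, sub_neg_eq_add] at h6
    simp only [Nat.cast_one, Complex.one_cpow, div_one]
    linarith
  nlinarith [norm_nonneg (riemannZeta (2 + T * Complex.I))]

open MeasureTheory Set Filter Asymptotics in
lemma zf_growth (s : ℂ) (hs : 1/10 ≤ s.re) : ‖zf s‖ ≤ 11 * (1 + ‖s‖)^2 := by
  let φ : ℝ → ℂ := indicator (Ioi 1) (fun t => ((Int.fract t : ℝ) : ℂ))
  have hφm : Measurable φ := by
    refine Measurable.indicator ?_ measurableSet_Ioi
    exact Complex.measurable_ofReal.comp measurable_fract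
  have hφb : ∀ t, ‖φ t‖ ≤ 1 := by
    intro t
    refine (norm_indicator_le_norm_self _ _).trans ?_
    rw [Complex.norm_real, Real.norm_of_nonneg (Int.fract_nonneg t)]
    exact (Int.fract_lt_one t).le
  have hmel : ∀ s : ℂ, mellin φ (-s) = ∫ t in Ioi (1:ℝ), (t:ℂ)^(-(s+1)) * ((Int.fract t : ℝ) : ℂ) := by
    intro s
    rw [mellin]
    have : ∀ t : ℝ, (t:ℂ)^(-s-1) • φ t = indicator (Ioi 1) (fun t : ℝ => (t:ℂ)^(-(s+1)) * ((Int.fract t : ℝ) : ℂ)) t := by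
      intro t
      by_cases ht : t ∈ Ioi (1:ℝ)
      · simp only [φ, indicator_of_mem ht, smul_eq_mul]; ring_nf
      · simp only [φ, indicator_of_notMem ht, smul_zero]
    simp_rw [this]
    rw [setIntegral_indicator measurableSet_Ioi]
    congr 2
    ext t; simp
  have hdiff : ∀ s : ℂ, 0 < s.re → DifferentiableAt ℂ (mellin φ) (-s) := by
    intro s hs
    refine mellin_differentiableAt_of_isBigO_rpow (a := 0) (b := -s.re - 1) ?_ ?_ (by simpa using hs) ?_ (by simp)
    · refine LocallyIntegrable.locallyIntegrableOn ?_ _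
      refine (MeasureTheory.locallyIntegrable_const (1:ℝ)).mono hφm.aestronglyMeasurable ?_
      filter_upwards with t using by simpa using hφb t
    · simp only [neg_zero, Real.rpow_zero]
      refine IsBigO.of_bound 1 ?_
      filter_upwards with t using by simpa using hφb t
    · refine EventuallyEq.trans_isBigO (f₂ := fun _ => (0:ℂ)) ?_ (isBigO_zero _ _)
      filter_upwards [mem_nhdsWithin_of_mem_nhds (Iio_mem_nhds (zero_lt_one' ℝ))] with t ht
      simp only [φ]
      refine indicator_of_notMem ?_ _
      simp only [mem_Iio, mem_Ioi] at ht ⊢; linarith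
  have hbound : ∀ s : ℂ, 0 < s.re → ‖mellin φ (-s)‖ ≤ 1 / s.re := by
    intro s hs
    rw [hmel]
    have h1 := integral_Ioi_rpow_of_lt (a := -(s.re+1)) (by linarith) (zero_lt_one' ℝ)
    have h2 := integrableOn_Ioi_rpow_of_lt (a := -(s.re+1)) (by linarith) (zero_lt_one' ℝ)
    refine (norm_integral_le_of_norm_le h2 ?_).trans (le_of_eq ?_)
    · filter_upwards [ae_restrict_mem measurableSet_Ioi] with t ht
      have ht0 : 0 < t := lt_trans one_pos ht
      rw [norm_mul, Complex.norm_cpow_eq_rpow_re_of_pos ht0, Complex.norm_real, Real.norm_of_nonneg (Int.fract_nonneg t)]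
      simp only [Complex.neg_re, Complex.add_re, Complex.one_re]
      exact mul_le_of_le_one_right (by positivity) (Int.fract_lt_one t).le
    · rw [h1]; simp
  -- identity for re > 1
  have hid : ∀ s : ℂ, 1 < s.re → zf s = s - s * (s-1) * mellin φ (-s) := by
    intro s hs
    have hs1 : s ≠ 1 := by rintro rfl; simp at hs
    have hs1' : s - 1 ≠ 0 := sub_ne_zero.2 hs1
    rw [zf_of_ne hs1, ← LSeries_one_eq_riemannZeta hs,
      LSeries_eq_mul_integral 1 zero_le_one hs (LSeriesSummable_one_iff.2 hs) ?_]
    · have h1 : ∫ t in Ioi (1:ℝ), (t:ℂ)^(-s) = 1 / (s-1) := by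
        rw [integral_Ioi_cpow_of_lt (by simpa using hs) one_pos]
        simp only [Complex.ofReal_one, Complex.one_cpow]
        rw [← neg_div_neg_eq]; congr 1 <;> ring
      have h2 : ∫ t in Ioi (1:ℝ), (∑ k ∈ Finset.Icc 1 ⌊t⌋₊, (1 : ℕ → ℂ) k) * (t:ℂ)^(-(s+1)) =
          (∫ t in Ioi (1:ℝ), (t:ℂ)^(-s)) - ∫ t in Ioi (1:ℝ), (t:ℂ)^(-(s+1)) * ((Int.fract t : ℝ) : ℂ) := by
        rw [← integral_sub (integrableOn_Ioi_cpow_of_lt (by simpa using hs) one_pos)]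
        · refine setIntegral_congr_fun measurableSet_Ioi fun t ht => ?_
          have ht0 : (0:ℝ) < t := lt_trans one_pos ht
          have ht0' : (t:ℂ) ≠ 0 := by exact_mod_cast ht0.ne'
          have hfl : ((⌊t⌋₊ : ℕ) : ℂ) = t - ((Int.fract t : ℝ) : ℂ) := by
            have : ((⌊t⌋₊ : ℕ) : ℝ) = t - Int.fract t := by
              rw [natCast_floor_eq_intCast_floor ht0.le, Int.self_sub_fract]
            rw [← Complex.ofReal_sub, ← this]; simp
          have hp : (t:ℂ)^(-s) = t * (t:ℂ)^(-(s+1)) := by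
            rw [show -s = 1 + -(s+1) by ring, Complex.cpow_add _ _ ht0', Complex.cpow_one]
          simp only [Pi.one_apply, Finset.sum_const, Nat.card_Icc, add_tsub_cancel_right, nsmul_eq_mul, mul_one]
          rw [hfl, hp]; ring
        · refine Integrable.mono' (integrableOn_Ioi_rpow_of_lt (a := -(s.re+1)) (by linarith) (zero_lt_one' ℝ)) ?_ ?_
          · refine Measurable.aestronglyMeasurable ?_
            refine Measurable.mul ?_ (Complex.measurable_ofReal.comp measurable_fract)
            fun_prop
          · filter_upwards [ae_restrict_mem measurableSet_Ioi] with t ht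
            have ht0 : 0 < t := lt_trans one_pos ht
            rw [norm_mul, Complex.norm_cpow_eq_rpow_re_of_pos ht0, Complex.norm_real, Real.norm_of_nonneg (Int.fract_nonneg t)]
            simp only [Complex.neg_re, Complex.add_re, Complex.one_re]
            exact mul_le_of_le_one_right (by positivity) (Int.fract_lt_one t).le
      rw [h2, h1, hmel]
      field_simp
    · refine IsBigO.of_bound 1 ?_
      filter_upwards with n
      simp
  have hopen : IsOpen {s : ℂ | 0 < s.re} := isOpen_lt continuous_const Complex.continuous_re
  have hEq : EqOn zf (fun s => s - s * (s-1) * mellin φ (-s)) {s : ℂ | 0 < s.re} := by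
    refine AnalyticOnNhd.eqOn_of_preconnected_of_eventuallyEq (𝕜 := ℂ) (z₀ := 2) ?_ ?_ ?_ (by simp) ?_
    · exact zf_diff.differentiableOn.analyticOnNhd hopen
    · refine DifferentiableOn.analyticOnNhd ?_ hopen
      intro w hw
      refine DifferentiableAt.differentiableWithinAt ?_
      have h1 : DifferentiableAt ℂ (fun s => mellin φ (-s)) w :=
        DifferentiableAt.comp (g := mellin φ) (f := fun s : ℂ => -s) w (hdiff w hw) (by fun_prop)
      fun_prop
    · exact (convex_halfSpace_re_gt (0:ℝ)).isPreconnected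
    · have : {s : ℂ | 1 < s.re} ∈ nhds (2:ℂ) := (isOpen_lt continuous_const Complex.continuous_re).mem_nhds (by simp)
      filter_upwards [this] with w hw using hid w hw
  have hs0 : 0 < s.re := by linarith
  rw [hEq hs0]
  have hb := hbound s hs0
  have h10 : 1 / s.re ≤ 10 := by rw [div_le_iff₀ hs0]; linarith
  have h1 : ‖s - 1‖ ≤ 1 + ‖s‖ := by
    have := norm_sub_le s 1
    simp at this; linarith
  calc ‖s - s * (s-1) * mellin φ (-s)‖ ≤ ‖s‖ + ‖s‖ * ‖s-1‖ * ‖mellin φ (-s)‖ := by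
        refine (norm_sub_le _ _).trans ?_
        rw [norm_mul, norm_mul]
    _ ≤ ‖s‖ + ‖s‖ * (1 + ‖s‖) * 10 := by
        have := hb.trans h10
        gcongr
    _ ≤ _ := by nlinarith [norm_nonneg s]

noncomputable def PP : ℂ → ℂ := fun s => deriv (logDeriv zf) s

open Filter Topology ArithmeticFunction in
lemma PP_eq {s : ℂ} (hs : 1 < s.re) :
    PP s = LSeries (LSeries.logMul (fun n => (Λ n : ℂ))) s - 1 / (s-1)^2 := by
  have hop : {s : ℂ | 1 < s.re} ∈ 𝓝 s := (isOpen_lt continuous_const Complex.continuous_re).mem_nhds hs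
  have h1 : logDeriv zf =ᶠ[𝓝 s] fun w => (w - 1)⁻¹ - LSeries (fun n => (Λ n : ℂ)) w := by
    filter_upwards [hop] with w hw
    have hw1 : w ≠ 1 := by rintro rfl; simp at hw
    have e1 : zf =ᶠ[𝓝 w] fun w => (w - 1) * riemannZeta w := by
      filter_upwards [isOpen_ne.mem_nhds hw1] with v hv using zf_of_ne hv
    have e2 : logDeriv zf w = logDeriv (fun w => (w - 1) * riemannZeta w) w := by
      simp only [logDeriv_apply, e1.deriv_eq, e1.eq_of_nhds]
    rw [e2, logDeriv_mul (f := fun w => w - 1) w (sub_ne_zero.2 hw1)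
      (riemannZeta_ne_zero_of_one_lt_re hw) (by fun_prop) (differentiableAt_riemannZeta hw1),
      LSeries_vonMangoldt_eq_deriv_riemannZeta_div hw, logDeriv_apply, logDeriv_apply]
    simp
    ring
  have hab : LSeries.abscissaOfAbsConv (fun n => (Λ n : ℂ)) < s.re := by
    refine lt_of_le_of_lt (LSeries.abscissaOfAbsConv_le_of_forall_lt_LSeriesSummable' (x := 1) ?_) (by exact_mod_cast hs)
    intro y hy
    exact LSeriesSummable_vonMangoldt (by rw [Complex.ofReal_re]; exact_mod_cast hy)
  have hs1 : s - 1 ≠ 0 := by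
    intro h; rw [sub_eq_zero] at h; rw [h] at hs; simp at hs
  rw [PP, h1.deriv_eq]
  have hd1 : HasDerivAt (fun w : ℂ => (w-1)⁻¹) (-1/(s-1)^2) s := ((hasDerivAt_id s).sub_const 1).inv hs1
  have := (hd1.sub (LSeries_hasDerivAt hab)).deriv
  rw [show (fun w : ℂ => (w - 1)⁻¹ - LSeries (fun n => (Λ n : ℂ)) w) = (fun w : ℂ => (w - 1)⁻¹) - LSeries (fun n => (Λ n : ℂ)) from rfl, this]
  ring

lemma PP_local : ∃ K : ℝ, 0 < K ∧ ∀ T : ℝ, ∃ (n : ℕ) (a : ℕ → ℂ),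
    (∀ i < n, zf (a i) = 0) ∧ (n : ℝ) ≤ K * Real.log (|T| + 2) ∧
    ∀ s : ℂ, ‖s - (2 + T * Complex.I)‖ ≤ 16/10 → zf s ≠ 0 →
      ‖PP s‖ ≤ K * Real.log (|T| + 2) + ∑ i ∈ Finset.range n, 1 / ‖s - a i‖^2 := by
  obtain ⟨K, hK, h⟩ := local_bound
  refine ⟨K * 12, by positivity, fun T => ?_⟩
  set u := |T| + 2 with hu
  have hu2 : 2 ≤ u := by have := abs_nonneg T; linarith
  have hlog : 0 < Real.log u := Real.log_pos (by linarith)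
  set c : ℂ := 2 + T * Complex.I with hc
  have hcn : ‖c‖ ≤ u := by
    refine (norm_add_le _ _).trans ?_
    simp [hu]; linarith
  have hbd : ∀ z : ℂ, ‖z‖ ≤ 19/10 → ‖3 * zf (c + z)‖ ≤ Real.exp (12 * Real.log u) := by
    intro z hz
    have hre : 1/10 ≤ (c+z).re := by
      have := (abs_le.1 (Complex.abs_re_le_norm z)).1
      simp [hc]; linarith
    have h1 := zf_growth (c+z) hre
    have h2 : ‖c + z‖ ≤ u + 2 := (norm_add_le _ _).trans (by linarith)
    have h3 : Real.exp (12 * Real.log u) = u ^ 12 := by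
      rw [mul_comm, Real.exp_mul, Real.exp_log (by linarith)]; norm_cast
    rw [h3, norm_mul]
    have h4 : 11 * (1 + ‖c+z‖)^2 ≤ 11 * (3 * u)^2 := by
      have := norm_nonneg (c+z)
      gcongr
      linarith
    have h5 : (2:ℝ)^10 ≤ u^10 := by gcongr
    have h6 : u^12 = u^10 * u^2 := by ring
    have h7 : 0 ≤ u^2 := by positivity
    have h8 : ‖(3:ℂ)‖ = 3 := by simp
    rw [h6, h8]
    nlinarith
  have hd : Differentiable ℂ (fun z => 3 * zf (c + z)) := by
    have := zf_diff
    have h2 : Differentiable ℂ (fun z => zf (c+z)) := this.comp (by fun_prop)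
    fun_prop
  obtain ⟨n, a, ha, hn, hP⟩ := h (fun z => 3 * zf (c + z)) (12 * Real.log u) (by positivity) hd
    (by
      have := zf_lower T
      simp only [add_zero, norm_mul]
      have h8 : ‖(3:ℂ)‖ = 3 := by simp
      rw [h8]; linarith) hbd
  refine ⟨n, fun i => c + a i, fun i hi => by simpa using ha i hi, by linarith, fun s hs hz => ?_⟩
  have h1 := hP (s - c) hs (by simpa using hz)
  have h2 : logDeriv (fun z => 3 * zf (c + z)) = fun z => logDeriv zf (c + z) := by
    funext z
    rw [logDeriv_const_mul _ _ (by norm_num), logDeriv_apply, logDeriv_apply, deriv_comp_const_add]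
  rw [h2, deriv_comp_const_add] at h1
  simp only [add_sub_cancel] at h1
  refine h1.trans (le_of_eq ?_)
  congr 1
  · ring
  · refine Finset.sum_congr rfl fun i _ => ?_
    rw [sub_sub]

lemma PP_analytic (hRH : RiemannHypothesis) {s : ℂ} (hs : 1/2 < s.re) : DifferentiableAt ℂ PP s := by
  have h1 : AnalyticAt ℂ zf s := zf_diff.analyticAt s
  have h2 : AnalyticAt ℂ (logDeriv zf) s := h1.deriv.div h1 (zf_ne hRH hs)
  exact h2.deriv.differentiableAt

lemma zero_dist (hRH : RiemannHypothesis) {a : ℂ} (ha : zf a = 0) {σ t : ℝ} {δ : ℝ} (hδ : 0 < δ) (hσ : 1/2 + δ ≤ σ) :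
    δ^2 + (t - a.im)^2 ≤ ‖(σ + t * Complex.I : ℂ) - a‖^2 := by
  have h1 : a.re ≤ 1/2 := by
    by_contra h; push Not at h; exact zf_ne hRH h ha
  rw [← Complex.normSq_eq_norm_sq, Complex.normSq_apply]
  simp
  nlinarith

lemma PP_point (hRH : RiemannHypothesis) : ∃ K : ℝ, 0 < K ∧ ∀ δ σ t : ℝ, 0 < δ → δ ≤ 1/2 → 1/2 + δ ≤ σ → σ ≤ 2 →
    ‖PP (σ + t * Complex.I)‖ ≤ K * Real.log (|t| + 2) / δ^2 := by
  obtain ⟨K, hK, h⟩ := PP_local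
  refine ⟨2 * K, by positivity, fun δ σ t hδ hδ2 h1 h2 => ?_⟩
  obtain ⟨n, a, ha, hn, hP⟩ := h t
  have hlog : 0 < Real.log (|t| + 2) := Real.log_pos (by have := abs_nonneg t; linarith)
  have := hP (σ + t * Complex.I) (by
    have : (σ + t * Complex.I : ℂ) - (2 + t * Complex.I) = ((σ - 2 : ℝ) : ℂ) := by push_cast; ring
    rw [this, Complex.norm_real, Real.norm_eq_abs, abs_le]
    constructor <;> linarith) (zf_ne hRH (by simp; linarith))
  refine this.trans ?_
  have hs : ∑ i ∈ Finset.range n, 1 / ‖(σ + t * Complex.I : ℂ) - a i‖^2 ≤ ∑ i ∈ Finset.range n, 1 / δ^2 := by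
    refine Finset.sum_le_sum fun i hi => ?_
    have h3 := zero_dist hRH (ha i (Finset.mem_range.1 hi)) (t := t) hδ h1
    refine one_div_le_one_div_of_le (by positivity) ?_
    nlinarith [sq_nonneg (t - (a i).im)]
  have hd1 : δ^2 ≤ 1 := by nlinarith
  simp only [Finset.sum_const, Finset.card_range, nsmul_eq_mul] at hs
  have h5 : K * Real.log (|t|+2) ≤ K * Real.log (|t|+2) / δ^2 := by
    rw [le_div_iff₀ (by positivity)]
    exact mul_le_of_le_one_right (by positivity) hd1
  have h6 : (n:ℝ) * (1/δ^2) ≤ K * Real.log (|t|+2) / δ^2 := by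
    rw [mul_one_div]; gcongr
  calc _ ≤ K * Real.log (|t|+2) / δ^2 + K * Real.log (|t|+2) / δ^2 := by linarith
    _ = _ := by ring

lemma int_lorentz {δ : ℝ} (hδ : 0 < δ) (γ : ℝ) {u v : ℝ} :
    ∫ t in u..v, 1 / (δ^2 + (t - γ)^2) ≤ Real.pi / δ := by
  have hd : ∀ t ∈ Set.uIcc u v, HasDerivAt (fun t => Real.arctan ((t - γ)/δ) / δ) (1 / (δ^2 + (t - γ)^2)) t := by
    intro t _
    have h1 : HasDerivAt (fun t => (t - γ)/δ) (1/δ) t := ((hasDerivAt_id t).sub_const γ).div_const δ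
    have := (h1.arctan).div_const δ
    have e : 1 / (δ^2 + (t - γ)^2) = 1 / (1 + ((t - γ)/δ)^2) * (1/δ) / δ := by
      have : δ^2 + (t - γ)^2 ≠ 0 := by positivity
      have h3 : 1 + ((t - γ)/δ)^2 = (δ^2 + (t - γ)^2)/δ^2 := by field_simp
      rw [h3]; field_simp
    rw [e]; exact this
  have hc : Continuous fun t : ℝ => 1 / (δ^2 + (t - γ)^2) := by
    refine Continuous.div₀ (by fun_prop) (by fun_prop) (fun t => ?_)
    positivity
  rw [intervalIntegral.integral_eq_sub_of_hasDerivAt hd (hc.intervalIntegrable _ _), ← sub_div]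
  gcongr
  have := Real.arctan_lt_pi_div_two ((v-γ)/δ)
  have := Real.neg_pi_div_two_lt_arctan ((u-γ)/δ)
  linarith

lemma PP_cont (hRH : RiemannHypothesis) {c : ℝ} (hc : 1/2 < c) : Continuous fun t : ℝ => PP (c + t * Complex.I) := by
  rw [continuous_iff_continuousAt]
  intro t
  have h := (PP_analytic hRH (s := c + t * Complex.I) (by simpa using hc)).continuousAt
  exact ContinuousAt.comp (f := fun t : ℝ => (c + t * Complex.I : ℂ)) h (by fun_prop)

lemma PP_window (hRH : RiemannHypothesis) : ∃ K : ℝ, 0 < K ∧ ∀ δ T : ℝ, 0 < δ → δ ≤ 1/2 →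
    ∫ t in (T-1/2)..(T+1/2), ‖PP ((1/2 + δ : ℝ) + t * Complex.I)‖ ≤ K * Real.log (|T| + 2) / δ := by
  obtain ⟨K, hK, h⟩ := PP_local
  refine ⟨5 * K, by positivity, fun δ T hδ hδ2 => ?_⟩
  obtain ⟨n, a, ha, hn, hP⟩ := h T
  have hlog : 0 < Real.log (|T| + 2) := Real.log_pos (by have := abs_nonneg T; linarith)
  have hcl : ∀ γ : ℝ, Continuous fun t : ℝ => 1 / (δ^2 + (t - γ)^2) := fun γ => by
    refine Continuous.div₀ (by fun_prop) (by fun_prop) (fun t => ?_)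
    positivity
  have hmono : ∫ t in (T-1/2)..(T+1/2), ‖PP ((1/2 + δ : ℝ) + t * Complex.I)‖ ≤
      ∫ t in (T-1/2)..(T+1/2), (K * Real.log (|T| + 2) + ∑ i ∈ Finset.range n, 1 / (δ^2 + (t - (a i).im)^2)) := by
    refine intervalIntegral.integral_mono_on (by linarith) ?_ ?_ ?_
    · exact ((PP_cont hRH (by linarith)).norm).intervalIntegrable _ _
    · exact (continuous_const.add (continuous_finsetSum _ fun i _ => hcl _)).intervalIntegrable _ _
    · intro t ht
      refine (hP _ ?_ (zf_ne hRH (by simp; linarith))).trans ?_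
      · have : ‖(((1/2 + δ : ℝ):ℂ) + t * Complex.I : ℂ) - (2 + T * Complex.I)‖^2 ≤ (16/10)^2 := by
          rw [← Complex.normSq_eq_norm_sq, Complex.normSq_apply]
          simp
          nlinarith [ht.1, ht.2]
        exact abs_le_of_sq_le_sq' this (by norm_num) |>.2
      · gcongr with i hi
        exact zero_dist hRH (ha i (Finset.mem_range.1 hi)) hδ le_rfl
  refine hmono.trans ?_
  rw [intervalIntegral.integral_add (by simp) ((continuous_finsetSum _ fun i _ => hcl _).intervalIntegrable _ _),
    intervalIntegral.integral_finsetSum (fun i _ => (hcl _).intervalIntegrable _ _), intervalIntegral.integral_const]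
  have hs : ∑ i ∈ Finset.range n, ∫ t in (T-1/2)..(T+1/2), 1 / (δ^2 + (t - (a i).im)^2) ≤ ∑ i ∈ Finset.range n, Real.pi / δ :=
    Finset.sum_le_sum fun i _ => int_lorentz hδ _
  simp only [Finset.sum_const, Finset.card_range, nsmul_eq_mul] at hs
  have h5 : K * Real.log (|T|+2) ≤ K * Real.log (|T|+2) / δ := by
    rw [le_div_iff₀ (by positivity)]
    exact mul_le_of_le_one_right (by positivity) (by linarith)
  have h6 : (n:ℝ) * (Real.pi/δ) ≤ K * Real.log (|T|+2) * 4 / δ := by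
    rw [mul_div_assoc']; gcongr; exact Real.pi_le_four
  have : (T + 1/2 - (T - 1/2)) • (K * Real.log (|T|+2)) = K * Real.log (|T|+2) := by
    rw [smul_eq_mul]; ring
  rw [this]
  calc _ ≤ K * Real.log (|T|+2) / δ + K * Real.log (|T|+2) * 4 / δ := by linarith
    _ = _ := by ring

lemma sum_rpow_le {b : ℝ} (hb : 0 < b) (N : ℕ) :
    ∑ k ∈ Finset.range (N+1), ((k:ℝ)+1)^(-1-b) ≤ 1 + 1/b - ((N:ℝ)+1)^(-b)/b := by
  induction N with
  | zero => simp
  | succ N ih =>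
    rw [Finset.sum_range_succ]
    have hu : (0:ℝ) < (N:ℝ) + 1 := by positivity
    have key : (((N+1:ℕ):ℝ)+1)^(-1-b) ≤ ((N:ℝ)+1)^(-b)/b - (((N+1:ℕ):ℝ)+1)^(-b)/b := by
      set u : ℝ := ((N+1:ℕ):ℝ)+1 with hu'
      have hN : (N:ℝ)+1 = u * (1 - 1/u) := by
        have : u ≠ 0 := by positivity
        field_simp; rw [hu']; push_cast; ring
      have hu0 : 0 < u := by positivity
      have h1 : 0 < 1 - 1/u := by
        rw [hN] at hu; exact (pos_iff_pos_of_mul_pos hu).1 hu0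
      rw [hN, Real.mul_rpow hu0.le h1.le]
      have h2 : 1 + b/u ≤ (1 - 1/u)^(-b) := by
        rw [Real.rpow_def_of_pos h1]
        have h3 := Real.add_one_le_exp (Real.log (1-1/u) * -b)
        have h4 := Real.log_le_sub_one_of_pos h1
        have h5 : b * Real.log (1 - 1/u) ≤ b * (-(1/u)) := by gcongr; linarith
        have h6 : b * (-(1/u)) = -(b/u) := by ring
        linarith
      have h7 : u^(-1-b) = u^(-b) / u := by
        rw [show -1-b = -b - 1 by ring, Real.rpow_sub_one hu0.ne']
      rw [h7, ← sub_div, le_div_iff₀ hb]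
      have h8 : 0 < u^(-b) := by positivity
      calc u^(-b)/u * b = u^(-b) * (1 + b/u) - u^(-b) := by field_simp; ring
        _ ≤ _ := by gcongr
    push_cast at *
    linarith

open MeasureTheory in
lemma weight_half {h : ℝ → ℝ} (hc : Continuous h) (h0 : ∀ t, 0 ≤ h t) {M : ℝ} (hM : 0 ≤ M)
    (hw : ∀ T : ℝ, ∫ t in (T-1/2)..(T+1/2), h t ≤ M * Real.log (|T|+2)) {a : ℝ} (ha : 0 < a) (ha1 : a ≤ 1) (N : ℕ) :
    ∫ t in (0:ℝ)..N, h t * (1+|t|)^(-1-a) ≤ 18 * M / a^2 := by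
  have hcw : Continuous fun t : ℝ => (1+|t|)^(-1-a) := by
    refine Continuous.rpow_const (by fun_prop) fun t => Or.inl ?_
    positivity
  have hi : ∀ k < N, IntervalIntegrable (fun t => h t * (1+|t|)^(-1-a)) volume ((k:ℕ):ℝ) ((k+1:ℕ):ℝ) :=
    fun k _ => (hc.mul hcw).intervalIntegrable _ _
  have hs := intervalIntegral.sum_integral_adjacent_intervals hi
  rw [Nat.cast_zero] at hs
  rw [← hs]
  have hk : ∀ k ∈ Finset.range N, ∫ t in ((k:ℕ):ℝ)..((k+1:ℕ):ℝ), h t * (1+|t|)^(-1-a) ≤ (6 * M / a) * ((k:ℝ)+1)^(-1-a/2) := by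
    intro k _
    have hk0 : (0:ℝ) ≤ k := k.cast_nonneg
    have h1 : ∫ t in ((k:ℕ):ℝ)..((k+1:ℕ):ℝ), h t * (1+|t|)^(-1-a) ≤ ∫ t in ((k:ℕ):ℝ)..((k+1:ℕ):ℝ), h t * ((k:ℝ)+1)^(-1-a) := by
      refine intervalIntegral.integral_mono_on (by simp) ((hc.mul hcw).intervalIntegrable _ _) ((hc.mul continuous_const).intervalIntegrable _ _) ?_
      intro t ht
      refine mul_le_mul_of_nonneg_left ?_ (h0 t)
      refine Real.rpow_le_rpow_of_nonpos (by positivity) ?_ (by linarith)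
      have := le_abs_self t
      linarith [ht.1]
    refine h1.trans ?_
    rw [intervalIntegral.integral_mul_const]
    have h2 := hw ((k:ℝ) + 1/2)
    rw [show (k:ℝ) + 1/2 - 1/2 = k by ring, show (k:ℝ) + 1/2 + 1/2 = ((k+1:ℕ):ℝ) by push_cast; ring, abs_of_nonneg (by positivity)] at h2
    have h3 : Real.log ((k:ℝ) + 1/2 + 2) ≤ 6/a * ((k:ℝ)+1)^(a/2) := by
      have h4 : Real.log ((k:ℝ) + 1/2 + 2) ≤ Real.log (3 * ((k:ℝ)+1)) := Real.log_le_log (by positivity) (by linarith)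
      have h5 := Real.log_le_rpow_div (x := 3 * ((k:ℝ)+1)) (by positivity) (ε := a/2) (by positivity)
      rw [Real.mul_rpow (by norm_num) (by positivity)] at h5
      have h6 : (3:ℝ)^(a/2) ≤ 3 := by
        have := Real.rpow_le_rpow_of_exponent_le (x := 3) (by norm_num) (show a/2 ≤ 1 by linarith)
        simpa using this
      refine (h4.trans h5).trans ?_
      have h7 : (0:ℝ) ≤ ((k:ℝ)+1)^(a/2) := by positivity
      calc (3:ℝ) ^ (a / 2) * ((k:ℝ) + 1) ^ (a / 2) / (a / 2) ≤ 3 * ((k:ℝ) + 1) ^ (a / 2) / (a / 2) := by gcongr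
        _ = _ := by field_simp; ring
    calc _ ≤ M * (6/a * ((k:ℝ)+1)^(a/2)) * ((k:ℝ)+1)^(-1-a) := by
          refine mul_le_mul_of_nonneg_right (h2.trans ?_) (by positivity)
          gcongr
      _ = 6 * M / a * (((k:ℝ)+1)^(a/2) * ((k:ℝ)+1)^(-1-a)) := by ring
      _ = _ := by rw [← Real.rpow_add (by positivity)]; ring_nf
  refine (Finset.sum_le_sum hk).trans ?_
  rw [← Finset.mul_sum]
  have h9 : ∑ k ∈ Finset.range N, ((k:ℝ)+1)^(-1-a/2) ≤ 3 / a := by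
    have h10 : ∑ k ∈ Finset.range N, ((k:ℝ)+1)^(-1-a/2) ≤ ∑ k ∈ Finset.range (N+1), ((k:ℝ)+1)^(-1-a/2) := by
      rw [Finset.sum_range_succ]
      have : (0:ℝ) ≤ ((N:ℝ)+1)^(-1-a/2) := by positivity
      linarith
    refine (h10.trans (sum_rpow_le (by positivity) N)).trans ?_
    have h11 : (0:ℝ) ≤ ((N:ℝ)+1)^(-(a/2))/(a/2) := by positivity
    have h12 : 1 + 1/(a/2) ≤ 3/a := by
      rw [le_div_iff₀ ha]
      have : (1 + 1/(a/2))*a = a + 2 := by field_simp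
      linarith
    linarith
  calc _ ≤ 6 * M / a * (3/a) := by gcongr
    _ = _ := by ring

open MeasureTheory Filter Topology in
lemma weight_full {h : ℝ → ℝ} (hc : Continuous h) (h0 : ∀ t, 0 ≤ h t) {M : ℝ} (hM : 0 ≤ M)
    (hw : ∀ T : ℝ, ∫ t in (T-1/2)..(T+1/2), h t ≤ M * Real.log (|T|+2)) {a : ℝ} (ha : 0 < a) (ha1 : a ≤ 1) :
    Integrable (fun t => h t * (1+|t|)^(-1-a)) ∧ ∫ t, h t * (1+|t|)^(-1-a) ≤ 36 * M / a^2 := by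
  have hcw : Continuous fun t : ℝ => (1+|t|)^(-1-a) := by
    refine Continuous.rpow_const (by fun_prop) fun t => Or.inl ?_
    positivity
  have hb : ∀ N : ℕ, ∫ t in (-(N:ℝ))..N, h t * (1+|t|)^(-1-a) ≤ 36 * M / a^2 := by
    intro N
    have hh : Continuous (fun t => h t * (1+|t|)^(-1-a)) := hc.mul hcw
    rw [← intervalIntegral.integral_add_adjacent_intervals (b := 0) (hh.intervalIntegrable _ _) (hh.intervalIntegrable _ _)]
    have h1 := weight_half hc h0 hM hw ha ha1 N
    have h2 := weight_half (h := fun t => h (-t)) (by fun_prop) (fun t => h0 _) hM (fun T => by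
      rw [intervalIntegral.integral_comp_neg (fun t => h t)]
      have := hw (-T)
      rw [abs_neg] at this
      rw [show -(T+1/2) = -T - 1/2 by ring, show -(T-1/2) = -T + 1/2 by ring]
      exact this) ha ha1 N
    have h3 := intervalIntegral.integral_comp_neg (a := 0) (b := N) (fun t => h t * (1+|t|)^(-1-a))
    simp only [abs_neg, neg_zero] at h3
    rw [h3] at h2
    have : 36 * M / a^2 = 18 * M / a^2 + 18 * M / a^2 := by ring
    linarith
  have hn : ∀ t, 0 ≤ h t * (1+|t|)^(-1-a) := fun t => mul_nonneg (h0 t) (by positivity)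
  have hN : Tendsto (fun N : ℕ => (N:ℝ)) atTop atTop := tendsto_natCast_atTop_atTop
  have hI : Integrable (fun t => h t * (1+|t|)^(-1-a)) := by
    refine integrable_of_intervalIntegral_norm_bounded (36 * M / a^2) (fun i : ℕ => ((hc.mul hcw).integrableOn_Icc).mono_set Set.Ioc_subset_Icc_self) (tendsto_neg_atTop_atBot.comp hN) hN ?_
    filter_upwards with N
    simp_rw [Real.norm_of_nonneg (hn _)]
    exact hb N
  refine ⟨hI, ?_⟩
  exact le_of_tendsto' (intervalIntegral_tendsto_integral hI (tendsto_neg_atTop_atBot.comp hN) hN) hb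

open MeasureTheory in
lemma PP_weight (hRH : RiemannHypothesis) : ∃ K : ℝ, 0 < K ∧ ∀ δ a : ℝ, 0 < δ → δ ≤ 1/2 → 0 < a → a ≤ 1 →
    Integrable (fun t : ℝ => ‖PP ((1/2 + δ : ℝ) + t * Complex.I)‖ * (1+|t|)^(-1-a)) ∧
    ∫ t : ℝ, ‖PP ((1/2 + δ : ℝ) + t * Complex.I)‖ * (1+|t|)^(-1-a) ≤ K / (δ * a^2) := by
  obtain ⟨K, hK, h⟩ := PP_window hRH
  refine ⟨36 * K, by positivity, fun δ a hδ hδ2 ha ha1 => ?_⟩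
  have := weight_full (h := fun t : ℝ => ‖PP ((1/2 + δ : ℝ) + t * Complex.I)‖) ((PP_cont hRH (by linarith)).norm)
    (fun t => norm_nonneg _) (M := K/δ) (by positivity) (fun T => (h δ T hδ hδ2).trans (le_of_eq (by ring))) ha ha1
  refine ⟨this.1, this.2.trans (le_of_eq ?_)⟩
  field_simp

noncomputable def AA (t : ℝ) : ℝ := ∑ k ∈ Finset.Icc 1 ⌊t⌋₊, Real.log k * ArithmeticFunction.vonMangoldt k

noncomputable def mm (t : ℝ) : ℝ := t * Real.log t - t + 1

noncomputable def EE (t : ℝ) : ℝ := AA t - mm t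

lemma AA_term_nonneg (k : ℕ) : 0 ≤ Real.log k * ArithmeticFunction.vonMangoldt k :=
  mul_nonneg (Real.log_natCast_nonneg k) ArithmeticFunction.vonMangoldt_nonneg

lemma AA_nonneg (t : ℝ) : 0 ≤ AA t := Finset.sum_nonneg fun k _ => AA_term_nonneg k

lemma AA_mono : Monotone AA := by
  intro s t h
  refine Finset.sum_le_sum_of_subset_of_nonneg (Finset.Icc_subset_Icc_right (Nat.floor_mono h)) fun k _ _ => AA_term_nonneg k

lemma log_le_two_sqrt {t : ℝ} (ht : 1 ≤ t) : Real.log t ≤ 2 * t^(1/2:ℝ) := by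
  have := Real.log_le_rpow_div (x := t) (by linarith) (ε := 1/2) (by norm_num)
  linarith

lemma AA_le {t : ℝ} (ht : 1 ≤ t) : AA t ≤ 6 * t * Real.log t := by
  have h1 : AA t ≤ Real.log t * Chebyshev.psi t := by
    rw [AA, Chebyshev.psi, Finset.mul_sum]
    rw [show Finset.Icc 1 ⌊t⌋₊ = Finset.Ioc 0 ⌊t⌋₊ from rfl]
    refine Finset.sum_le_sum fun k hk => ?_
    refine mul_le_mul_of_nonneg_right ?_ ArithmeticFunction.vonMangoldt_nonneg
    rw [Finset.mem_Ioc] at hk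
    exact Real.log_le_log (by exact_mod_cast hk.1) ((Nat.le_floor_iff (by linarith)).1 hk.2)
  have h2 := Chebyshev.psi_le_const_mul_self (x := t) (by linarith)
  have h3 : Real.log 4 ≤ 2 := by
    have : Real.log 4 = 2 * Real.log 2 := by
      rw [show (4:ℝ) = 2^2 by norm_num, Real.log_pow]; norm_num
    have := Real.log_two_lt_d9
    linarith
  have h4 := Real.log_nonneg ht
  calc AA t ≤ Real.log t * ((Real.log 4 + 4) * t) := h1.trans (by gcongr)
    _ ≤ Real.log t * ((2 + 4) * t) := by gcongr
    _ = _ := by ring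

lemma EE_abs_le {t : ℝ} (ht : 1 ≤ t) : |EE t| ≤ 14 * t^(3/2:ℝ) := by
  have h1 := AA_le ht
  have h0 := AA_nonneg t
  have h4 := Real.log_nonneg ht
  have h2 : 0 ≤ mm t := by
    have := Real.one_sub_inv_le_log_of_pos (x := t) (by linarith)
    have h5 : t * (1 - t⁻¹) ≤ t * Real.log t := by gcongr
    have h6 : t * (1 - t⁻¹) = t - 1 := by field_simp
    unfold mm; linarith
  have h3 : mm t ≤ t * Real.log t := by unfold mm; linarith
  have h5 := log_le_two_sqrt ht
  have h6 : t^(3/2:ℝ) = t * t^(1/2:ℝ) := by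
    rw [show (3/2:ℝ) = 1 + 1/2 by norm_num, Real.rpow_add (by linarith), Real.rpow_one]
  have h7 : t * Real.log t ≤ t * (2 * t^(1/2:ℝ)) := by gcongr
  rw [EE, abs_le, h6]
  constructor <;> nlinarith

lemma EE_meas : Measurable EE := by
  have h1 : Measurable AA := AA_mono.measurable
  have h2 : Measurable mm := by unfold mm; fun_prop
  exact h1.sub h2

lemma cpow_norm_two {s : ℂ} (hs : s.re = 2) {t : ℝ} (ht : 0 < t) : ‖(t:ℂ)^(-(s+1))‖ = t^(-3:ℝ) := by
  rw [Complex.norm_cpow_eq_rpow_re_of_pos ht]; simp [hs]; norm_num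

open MeasureTheory Set Filter Topology in
lemma int_log_cpow {s : ℂ} (hs : s.re = 2) :
    IntegrableOn (fun t : ℝ => (Real.log t : ℂ) * (t:ℂ)^(-s)) (Ioi 1) ∧
    ∫ t in Ioi (1:ℝ), (Real.log t : ℂ) * (t:ℂ)^(-s) = 1 / (s-1)^2 := by
  have hs1 : (1 - s) ≠ 0 := by
    intro h; have := congrArg Complex.re h; simp [hs] at this; norm_num at this
  have hI : IntegrableOn (fun t : ℝ => (Real.log t : ℂ) * (t:ℂ)^(-s)) (Ioi 1) := by
    refine Integrable.mono' ((integrableOn_Ioi_rpow_of_lt (a := -3/2) (by norm_num) (zero_lt_one' ℝ)).const_mul 2) ?_ ?_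
    · refine Measurable.aestronglyMeasurable ?_
      refine Measurable.mul ?_ (by fun_prop)
      exact Complex.measurable_ofReal.comp Real.measurable_log
    · filter_upwards [ae_restrict_mem measurableSet_Ioi] with t ht
      have ht1 : (1:ℝ) < t := ht
      have ht0 : 0 < t := lt_trans one_pos ht
      rw [norm_mul, Complex.norm_cpow_eq_rpow_re_of_pos ht0, Complex.norm_real, Real.norm_of_nonneg (Real.log_nonneg ht1.le)]
      have h1 := log_le_two_sqrt ht1.le
      rw [show (-3/2:ℝ) = 1/2 + (-s).re by simp [hs]; norm_num, Real.rpow_add ht0, ← mul_assoc]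
      gcongr
  refine ⟨hI, ?_⟩
  have hcd : ∀ t : ℝ, 0 < t → HasDerivAt (fun t : ℝ => (t:ℂ)^(1-s) * ((Real.log t : ℂ) / (1-s) - 1/(1-s)^2)) ((Real.log t : ℂ) * (t:ℂ)^(-s)) t := by
    intro t ht
    have ht' : (t:ℂ) ≠ 0 := by exact_mod_cast ht.ne'
    have h1 : HasDerivAt (fun t : ℝ => (t:ℂ)^(1-s)) ((1-s) * (t:ℂ)^(-s)) t := by
      have := hasDerivAt_ofReal_cpow_const (r := 1 - s) ht.ne' hs1
      rwa [show 1 - s - 1 = -s by ring] at this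
    have h2 : HasDerivAt (fun t : ℝ => (Real.log t : ℂ) / (1-s) - 1/(1-s)^2) (((t⁻¹:ℝ):ℂ) / (1-s)) t :=
      (((Real.hasDerivAt_log ht.ne').ofReal_comp).div_const _).sub_const _
    refine (h1.mul h2).congr_deriv ?_
    have e : (t:ℂ)^(1-s) = t * (t:ℂ)^(-s) := by
      rw [show 1 - s = 1 + -s by ring, Complex.cpow_add _ _ ht', Complex.cpow_one]
    rw [e]; push_cast
    field_simp
    ring
  have hlim : Tendsto (fun t : ℝ => (t:ℂ)^(1-s) * ((Real.log t : ℂ) / (1-s) - 1/(1-s)^2)) atTop (𝓝 0) := by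
    have hb : Tendsto (fun t : ℝ => (Real.log t / t) * ‖1/(1-s)‖ + t⁻¹ * ‖1/(1-s)^2‖) atTop (𝓝 0) := by
      have h1 : Tendsto (fun t : ℝ => Real.log t / t) atTop (𝓝 0) := by
        have := Real.isLittleO_log_id_atTop.tendsto_div_nhds_zero
        exact this
      have h2 := (h1.mul_const ‖1/(1-s)‖).add (tendsto_inv_atTop_zero.mul_const ‖1/(1-s)^2‖)
      rw [zero_mul, zero_mul, add_zero] at h2
      exact h2
    refine squeeze_zero_norm' ?_ hb
    filter_upwards [eventually_gt_atTop 1] with t ht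
    have ht0 : 0 < t := by linarith
    rw [norm_mul, Complex.norm_cpow_eq_rpow_re_of_pos ht0]
    have e : (1 - s).re = -1 := by simp [hs]; norm_num
    rw [e, Real.rpow_neg_one]
    have h3 : ‖(Real.log t : ℂ) / (1-s) - 1/(1-s)^2‖ ≤ Real.log t * ‖1/(1-s)‖ + ‖1/(1-s)^2‖ := by
      refine (norm_sub_le _ _).trans ?_
      rw [div_eq_mul_one_div, norm_mul, Complex.norm_real, Real.norm_of_nonneg (Real.log_nonneg ht.le)]
    calc _ ≤ t⁻¹ * (Real.log t * ‖1/(1-s)‖ + ‖1/(1-s)^2‖) := by gcongr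
      _ = _ := by ring
  rw [integral_Ioi_of_hasDerivAt_of_tendsto (hcd 1 one_pos).continuousAt.continuousWithinAt (fun t ht => hcd t (lt_trans one_pos ht)) hI hlim]
  simp
  rw [← neg_sub s 1, neg_sq]

open MeasureTheory Set Filter Topology in
lemma mm_mellin {s : ℂ} (hs : s.re = 2) :
    IntegrableOn (fun t : ℝ => (mm t : ℂ) * (t:ℂ)^(-(s+1))) (Ioi 1) ∧
    ∫ t in Ioi (1:ℝ), (mm t : ℂ) * (t:ℂ)^(-(s+1)) = 1 / (s * (s-1)^2) := by
  obtain ⟨h1, h2⟩ := int_log_cpow hs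
  have h3 := integrableOn_Ioi_cpow_of_lt (a := -s) (c := 1) (by simp [hs]) one_pos
  have h4 := integrableOn_Ioi_cpow_of_lt (a := -(s+1)) (c := 1) (by simp [hs]) one_pos
  have e3 := integral_Ioi_cpow_of_lt (a := -s) (c := 1) (by simp [hs]) one_pos
  have e4 := integral_Ioi_cpow_of_lt (a := -(s+1)) (c := 1) (by simp [hs]) one_pos
  have hs0 : s ≠ 0 := by rintro rfl; simp at hs
  have hs1 : s - 1 ≠ 0 := by
    intro h; have := congrArg Complex.re h; simp [hs] at this; norm_num at this
  have hEq : EqOn (fun t : ℝ => (mm t : ℂ) * (t:ℂ)^(-(s+1))) (fun t : ℝ => (Real.log t : ℂ) * (t:ℂ)^(-s) - (t:ℂ)^(-s) + (t:ℂ)^(-(s+1))) (Ioi 1) := by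
    intro t ht
    have ht0 : (0:ℝ) < t := lt_trans one_pos ht
    have ht0' : (t:ℂ) ≠ 0 := by exact_mod_cast ht0.ne'
    have hp : (t:ℂ)^(-s) = t * (t:ℂ)^(-(s+1)) := by
      rw [show -s = 1 + -(s+1) by ring, Complex.cpow_add _ _ ht0', Complex.cpow_one]
    simp only [mm]
    rw [hp]; push_cast; ring
  refine ⟨((h1.sub h3).add h4).congr_fun hEq.symm measurableSet_Ioi, ?_⟩
  rw [setIntegral_congr_fun measurableSet_Ioi hEq, integral_add (f := fun t : ℝ => (Real.log t : ℂ) * (t:ℂ)^(-s) - (t:ℂ)^(-s)) (h1.sub h3) h4, integral_sub h1 h3, h2, e3, e4]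
  simp only [Complex.ofReal_one, Complex.one_cpow]
  have a1 : -s + 1 ≠ 0 := by rw [show -s+1 = -(s-1) by ring]; exact neg_ne_zero.2 hs1
  have a2 : -(s+1) + 1 ≠ 0 := by rw [show -(s+1)+1 = -s by ring]; exact neg_ne_zero.2 hs0
  rw [show -s+1 = -(s-1) by ring, show -(s+1)+1 = -s by ring]
  field_simp
  ring

open MeasureTheory Set Filter Topology in
lemma EE_integrable {s : ℂ} (hs : s.re = 2) : IntegrableOn (fun t : ℝ => (EE t : ℂ) * (t:ℂ)^(-(s+1))) (Ioi 1) := by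
  refine Integrable.mono' ((integrableOn_Ioi_rpow_of_lt (a := -3/2) (by norm_num) (zero_lt_one' ℝ)).const_mul 14) ?_ ?_
  · refine Measurable.aestronglyMeasurable ?_
    refine Measurable.mul ?_ (by fun_prop)
    exact Complex.measurable_ofReal.comp EE_meas
  · filter_upwards [ae_restrict_mem measurableSet_Ioi] with t ht
    have ht1 : (1:ℝ) < t := ht
    have ht0 : 0 < t := lt_trans one_pos ht
    rw [norm_mul, cpow_norm_two hs ht0, Complex.norm_real, Real.norm_eq_abs]
    have h1 := EE_abs_le ht1.le
    rw [show (-3/2:ℝ) = 3/2 + (-3) by norm_num, Real.rpow_add ht0, ← mul_assoc]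
    gcongr

open MeasureTheory Set Filter Topology in
lemma EE_mellin {s : ℂ} (hs : s.re = 2) :
    ∫ t in Ioi (1:ℝ), (EE t : ℂ) * (t:ℂ)^(-(s+1)) = PP s / s := by
  have hs0 : s ≠ 0 := by rintro rfl; simp at hs
  have hs1 : s - 1 ≠ 0 := by
    intro h; have := congrArg Complex.re h; simp [hs] at this; norm_num at this
  have hL := LSeries_eq_mul_integral_of_nonneg (fun n => Real.log n * ArithmeticFunction.vonMangoldt n) (r := 3/2) (by norm_num) (s := s) (by rw [hs]; norm_num) ?_ AA_term_nonneg
  · have e1 : (LSeries.logMul (fun n => (ArithmeticFunction.vonMangoldt n : ℂ))) = fun n : ℕ => ((Real.log n * ArithmeticFunction.vonMangoldt n : ℝ) : ℂ) := by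
      funext n
      simp [LSeries.logMul, Complex.natCast_log]
    rw [PP_eq (by rw [hs]; norm_num), e1, hL]
    obtain ⟨hm, hm2⟩ := mm_mellin hs
    have hA : ∫ t in Ioi (1:ℝ), (∑ k ∈ Finset.Icc 1 ⌊t⌋₊, ((Real.log k * ArithmeticFunction.vonMangoldt k : ℝ) : ℂ)) * (t:ℂ)^(-(s+1)) =
        (∫ t in Ioi (1:ℝ), (EE t : ℂ) * (t:ℂ)^(-(s+1))) + ∫ t in Ioi (1:ℝ), (mm t : ℂ) * (t:ℂ)^(-(s+1)) := by
      rw [← integral_add (EE_integrable hs) hm]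
      congr 1
      funext t
      simp only [EE, AA]
      push_cast
      ring
    rw [hA, hm2]
    field_simp
    ring
  · refine Asymptotics.IsBigO.of_bound 14 ?_
    filter_upwards [eventually_ge_atTop 1] with n hn
    have hn1 : (1:ℝ) ≤ n := by exact_mod_cast hn
    have h1 : ∑ k ∈ Finset.Icc 1 n, Real.log k * ArithmeticFunction.vonMangoldt k = AA n := by simp [AA]
    rw [h1, Real.norm_of_nonneg (AA_nonneg _), Real.norm_of_nonneg (by positivity)]
    have h2 := AA_le hn1
    have h3 := log_le_two_sqrt hn1
    have h6 : (n:ℝ)^(3/2:ℝ) = n * (n:ℝ)^(1/2:ℝ) := by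
      rw [show (3/2:ℝ) = 1 + 1/2 by norm_num, Real.rpow_add (by linarith), Real.rpow_one]
    rw [h6]
    have h7 : n * Real.log n ≤ n * (2 * (n:ℝ)^(1/2:ℝ)) := by gcongr
    nlinarith [show (0:ℝ) ≤ n * (n:ℝ)^(1/2:ℝ) by positivity]

noncomputable def ee : ℝ → ℝ := Set.indicator (Set.Ioi 1) (fun t => EE t / t)

noncomputable def E1 (x : ℝ) : ℝ := ∫ t in (1:ℝ)..x, ee t

lemma ee_meas : Measurable ee := (EE_meas.div measurable_id).indicator measurableSet_Ioi

lemma ee_of_gt {t : ℝ} (ht : 1 < t) : ee t = EE t / t := Set.indicator_of_mem (s := Set.Ioi (1:ℝ)) ht _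

lemma ee_of_le {t : ℝ} (ht : t ≤ 1) : ee t = 0 := Set.indicator_of_notMem (by simpa using ht) _

lemma ee_abs_le (t : ℝ) : |ee t| ≤ 14 * (1 + |t|) := by
  by_cases ht : 1 < t
  · have ht0 : 0 < t := by linarith
    rw [ee_of_gt ht, abs_div, abs_of_pos ht0, div_le_iff₀ ht0]
    refine (EE_abs_le ht.le).trans ?_
    have : t^(3/2:ℝ) ≤ t^(2:ℝ) := Real.rpow_le_rpow_of_exponent_le ht.le (by norm_num)
    rw [Real.rpow_two] at this
    nlinarith
  · rw [ee_of_le (by linarith), abs_zero]; positivity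

open MeasureTheory in
lemma ee_int (a b : ℝ) : IntervalIntegrable ee volume a b := by
  have hc : Continuous fun t : ℝ => 14 * (1 + |t|) := by fun_prop
  refine (hc.intervalIntegrable a b).mono_fun ee_meas.aestronglyMeasurable ?_
  filter_upwards with t
  rw [Real.norm_eq_abs, Real.norm_eq_abs]
  exact (ee_abs_le t).trans (le_abs_self _)

lemma E1_cont : Continuous E1 := intervalIntegral.continuous_primitive (fun a b => ee_int a b) 1

lemma E1_of_le {x : ℝ} (hx : x ≤ 1) : E1 x = 0 := by
  rw [E1, intervalIntegral.integral_symm, intervalIntegral.integral_zero_ae, neg_zero]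
  filter_upwards with t ht
  rw [Set.uIoc_of_le hx] at ht
  exact ee_of_le ht.2

noncomputable def FF (s : ℂ) (p : ℝ × ℝ) : ℂ := if p.2 ≤ p.1 then (p.1:ℂ)^(-(s+1)) * ((EE p.2 / p.2 : ℝ) : ℂ) else 0

open MeasureTheory Set in
lemma FF_int {s : ℂ} (hs : s.re = 2) : Integrable (FF s) ((volume.restrict (Ioi (1:ℝ))).prod (volume.restrict (Ioi (1:ℝ)))) := by
  have h1 := integrableOn_Ioi_rpow_of_lt (a := -5/4) (by norm_num) (zero_lt_one' ℝ)
  have h2 := (Integrable.mul_prod h1 h1).const_mul 14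
  refine h2.mono' ?_ ?_
  · refine Measurable.aestronglyMeasurable ?_
    unfold FF
    refine Measurable.ite (measurableSet_le measurable_snd measurable_fst) ?_ measurable_const
    refine Measurable.mul (by fun_prop) (Complex.measurable_ofReal.comp ?_)
    exact (EE_meas.comp measurable_snd).div measurable_snd
  · rw [Measure.prod_restrict]
    filter_upwards [ae_restrict_mem (measurableSet_Ioi.prod measurableSet_Ioi)] with p hp
    have hx : 1 < p.1 := hp.1
    have ht : 1 < p.2 := hp.2
    have hx0 : 0 < p.1 := by linarith
    have ht0 : 0 < p.2 := by linarith
    unfold FF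
    split_ifs with h
    · rw [norm_mul, cpow_norm_two hs hx0, Complex.norm_real, Real.norm_eq_abs, abs_div, abs_of_pos ht0]
      have h3 : p.1^(-3:ℝ) ≤ p.1^(-5/4:ℝ) * p.2^(-7/4:ℝ) := by
        rw [show (-3:ℝ) = -5/4 + -7/4 by norm_num, Real.rpow_add hx0]
        gcongr 1
        exact Real.rpow_le_rpow_of_nonpos ht0 h (by norm_num)
      have h4 : |EE p.2| / p.2 ≤ 14 * p.2^(1/2:ℝ) := by
        rw [div_le_iff₀ ht0]
        refine (EE_abs_le ht.le).trans (le_of_eq ?_)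
        rw [mul_assoc, ← Real.rpow_add_one ht0.ne']; norm_num
      calc _ ≤ (p.1^(-5/4:ℝ) * p.2^(-7/4:ℝ)) * (14 * p.2^(1/2:ℝ)) := by gcongr
        _ = 14 * (p.1^(-5/4:ℝ) * (p.2^(-7/4:ℝ) * p.2^(1/2:ℝ))) := by ring
        _ = _ := by rw [← Real.rpow_add ht0]; norm_num
    · rw [norm_zero]; positivity

open MeasureTheory Set in
lemma FF_inner1 (s : ℂ) {x : ℝ} (hx : 1 < x) : ∫ t in Ioi (1:ℝ), FF s (x, t) = (x:ℂ)^(-s-1) • (E1 x : ℂ) := by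
  have h1 : EqOn (fun t => FF s (x,t)) (indicator (Iic x) (fun t => (x:ℂ)^(-s-1) * (ee t : ℂ))) (Ioi 1) := by
    intro t ht
    simp only [FF, indicator, mem_Iic]
    rw [ee_of_gt ht]
    split_ifs <;> ring_nf
  rw [setIntegral_congr_fun measurableSet_Ioi h1, setIntegral_indicator measurableSet_Iic, Ioi_inter_Iic,
    integral_const_mul, E1, intervalIntegral.integral_of_le hx.le, smul_eq_mul, integral_complex_ofReal]

open MeasureTheory Set in
lemma FF_inner2 {s : ℂ} (hs : s.re = 2) {t : ℝ} (ht : 1 < t) : ∫ x in Ioi (1:ℝ), FF s (x, t) = (1/s) * ((EE t : ℂ) * (t:ℂ)^(-(s+1))) := by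
  have ht0 : 0 < t := by linarith
  have ht0' : (t:ℂ) ≠ 0 := by exact_mod_cast ht0.ne'
  have hs0 : s ≠ 0 := by rintro rfl; simp at hs
  have h1 : (fun x => FF s (x,t)) = (indicator (Ici t) (fun x : ℝ => (x:ℂ)^(-(s+1)) * ((EE t / t : ℝ) : ℂ))) := by
    funext x
    simp only [FF, indicator, mem_Ici]
  have h2 : Ioi 1 ∩ Ici t = Ici t := inter_eq_right.2 fun x hx => lt_of_lt_of_le ht hx
  rw [h1, setIntegral_indicator measurableSet_Ici, h2, integral_Ici_eq_integral_Ioi, integral_mul_const,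
    integral_Ioi_cpow_of_lt (by simp [hs]) ht0]
  have hp : (t:ℂ)^(-(s+1)+1) = t * (t:ℂ)^(-(s+1)) := by
    rw [add_comm, Complex.cpow_add _ _ ht0', Complex.cpow_one]
  rw [hp, show -(s+1)+1 = -s by ring]
  push_cast
  field_simp

open MeasureTheory Set in
lemma E1_conv {s : ℂ} (hs : s.re = 2) : IntegrableOn (fun x : ℝ => (x:ℂ)^(-s-1) • (E1 x : ℂ)) (Ioi 0) := by
  have h1 := (FF_int hs).integral_prod_left
  have h2 : IntegrableOn (fun x : ℝ => (x:ℂ)^(-s-1) • (E1 x : ℂ)) (Ioi 1) :=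
    IntegrableOn.congr_fun h1 (fun x hx => FF_inner1 s hx) measurableSet_Ioi
  have h3 : IntegrableOn (fun x : ℝ => (x:ℂ)^(-s-1) • (E1 x : ℂ)) (Ioc 0 1) :=
    (integrableOn_zero).congr_fun (fun x hx => by simp [E1_of_le hx.2]) measurableSet_Ioc
  rw [← Ioc_union_Ioi_eq_Ioi (zero_le_one' ℝ)]
  exact h3.union h2

open MeasureTheory Set in
lemma E1_mellin {s : ℂ} (hs : s.re = 2) : mellin (fun x => (E1 x : ℂ)) (-s) = PP s / s^2 := by
  have hs0 : s ≠ 0 := by rintro rfl; simp at hs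
  have h4 := E1_conv hs
  rw [mellin, ← Ioc_union_Ioi_eq_Ioi (zero_le_one' ℝ), setIntegral_union (by
    rw [disjoint_left]; intro x hx hx'; exact absurd hx.2 (not_le.2 hx')) measurableSet_Ioi
    (h4.mono_set Ioc_subset_Ioi_self) (h4.mono_set (Ioi_subset_Ioi zero_le_one))]
  have h3 : ∫ x in Ioc (0:ℝ) 1, (x:ℂ)^(-s-1) • (E1 x : ℂ) = 0 := by
    rw [setIntegral_congr_fun (g := fun _ => (0:ℂ)) measurableSet_Ioc (fun x hx => by simp [E1_of_le hx.2])]; simp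
  rw [h3, zero_add, ← setIntegral_congr_fun measurableSet_Ioi (fun x hx => FF_inner1 s hx)]
  have hsw := integral_integral_swap (f := fun x t => FF s (x,t)) (FF_int hs)
  rw [hsw, setIntegral_congr_fun measurableSet_Ioi (fun t ht => FF_inner2 hs ht), integral_const_mul, EE_mellin hs]
  field_simp

lemma PP_decay (hRH : RiemannHypothesis) {δ : ℝ} (hδ : 0 < δ) (hδ2 : δ ≤ 1/2) : ∃ K : ℝ, 0 < K ∧ ∀ σ t : ℝ, 1/2 + δ ≤ σ → σ ≤ 2 →
    ‖PP (σ + t * Complex.I) / (σ + t * Complex.I)^2‖ ≤ K * (1 + |t|)^(-3/2:ℝ) := by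
  obtain ⟨K, hK, h⟩ := PP_point hRH
  refine ⟨K * 4 / δ^2 * 9, by positivity, fun σ t h1 h2 => ?_⟩
  have h3 := h δ σ t hδ hδ2 h1 h2
  have ht := abs_nonneg t
  have hn : (1+|t|)/3 ≤ ‖(σ + t * Complex.I : ℂ)‖ := by
    have e1 := Complex.abs_re_le_norm (σ + t * Complex.I : ℂ)
    have e2 := Complex.abs_im_le_norm (σ + t * Complex.I : ℂ)
    simp at e1 e2
    have := le_abs_self σ
    linarith
  have hlog : Real.log (|t| + 2) ≤ 4 * (1+|t|)^(1/2:ℝ) := by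
    have e1 := log_le_two_sqrt (t := |t| + 2) (by linarith)
    have e2 : (|t|+2)^(1/2:ℝ) ≤ (4 * (1 + |t|))^(1/2:ℝ) := by gcongr; linarith
    have e3 : (4:ℝ)^(1/2:ℝ) = 2 := by
      rw [show (4:ℝ) = 2^(2:ℝ) by norm_num, ← Real.rpow_mul (by norm_num)]; norm_num
    rw [Real.mul_rpow (by norm_num) (by positivity), e3] at e2
    linarith
  rw [norm_div, norm_pow]
  have h5 : ((1+|t|)/3)^2 ≤ ‖(σ + t * Complex.I : ℂ)‖^2 := by gcongr
  calc _ ≤ (K * (4 * (1+|t|)^(1/2:ℝ)) / δ^2) / ((1+|t|)/3)^2 := by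
        gcongr
        refine h3.trans ?_
        gcongr
    _ = K * 4 / δ^2 * 9 * ((1+|t|)^(1/2:ℝ) / (1+|t|)^2) := by
      generalize (1+|t|)^(1/2:ℝ) = w
      have hw0 : 1 + |t| ≠ 0 := by positivity
      field_simp
      try norm_num
    _ = _ := by
      have e : (1+|t|)^(1/2:ℝ) / (1+|t|)^2 = (1+|t|)^(-3/2:ℝ) := by
        rw [← Real.rpow_two (1+|t|), ← Real.rpow_sub (by positivity)]; norm_num
      rw [e]

open MeasureTheory in
lemma decay_int : Integrable (fun t : ℝ => (1 + |t|)^(-3/2:ℝ)) := by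
  have := integrable_one_add_norm (E := ℝ) (μ := volume) (r := 3/2) (by simp; norm_num)
  simpa [neg_div] using this

open MeasureTheory in
lemma PP_line_int (hRH : RiemannHypothesis) {c : ℝ} (hc : 1/2 < c) (hc2 : c ≤ 2) :
    Integrable (fun t : ℝ => PP (c + t * Complex.I) / (c + t * Complex.I)^2) := by
  obtain ⟨K, hK, h⟩ := PP_decay hRH (δ := min (c - 1/2) (1/2)) (lt_min (by linarith) (by norm_num)) (min_le_right _ _)
  refine (decay_int.const_mul K).mono' ?_ ?_
  · refine Continuous.aestronglyMeasurable ?_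
    refine (PP_cont hRH hc).div₀ (by fun_prop) fun t => ?_
    refine pow_ne_zero _ fun h => ?_
    have := congrArg Complex.re h; simp at this; linarith
  · filter_upwards with t
    exact h c t (by have := min_le_left (c-1/2) (1/2); linarith) hc2

open MeasureTheory in
lemma perron2 (hRH : RiemannHypothesis) {x : ℝ} (hx : 0 < x) :
    (E1 x : ℂ) = (1/(2*Real.pi)) • ∫ t : ℝ, (x:ℂ)^((2:ℝ) + t * Complex.I : ℂ) * (PP ((2:ℝ) + t * Complex.I) / ((2:ℝ) + t * Complex.I)^2) := by
  have hm : ∀ t : ℝ, mellin (fun x => (E1 x : ℂ)) (((-2:ℝ):ℂ) + t * Complex.I) = PP ((2:ℝ) + ((-t:ℝ):ℂ) * Complex.I) / ((2:ℝ) + ((-t:ℝ):ℂ) * Complex.I)^2 := by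
    intro t
    rw [← E1_mellin (by simp)]
    congr 1
    push_cast; ring
  have hi := PP_line_int hRH (c := 2) (by norm_num) le_rfl
  have := mellinInv_mellin_eq (-2) (fun x => (E1 x : ℂ)) hx (by
      have := E1_conv (s := 2) (by simp)
      rw [MellinConvergent]
      convert this using 4
      simp) (by
      rw [Complex.VerticalIntegrable]
      simp_rw [hm]
      exact hi.comp_neg) (Complex.continuous_ofReal.comp E1_cont).continuousAt
  rw [← this, mellinInv]
  congr 1
  rw [← integral_neg_eq_self]
  congr 1
  funext t
  rw [hm, smul_eq_mul]
  congr 2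
  · push_cast; ring
  · simp
  · simp

open MeasureTheory Filter Topology Set in
lemma shift_line {g : ℂ → ℂ} {c d K : ℝ} (hcd : c ≤ d) (hg : ∀ s : ℂ, c ≤ s.re → DifferentiableAt ℂ g s)
    (hK : ∀ σ t : ℝ, c ≤ σ → σ ≤ d → ‖g (σ + t * Complex.I)‖ ≤ K * (1 + |t|)^(-3/2:ℝ)) :
    ∫ t : ℝ, g (d + t * Complex.I) = ∫ t : ℝ, g (c + t * Complex.I) := by
  have hcont : ∀ σ : ℝ, c ≤ σ → Continuous fun t : ℝ => g (σ + t * Complex.I) := by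
    intro σ hσ
    rw [continuous_iff_continuousAt]
    intro t
    exact ContinuousAt.comp (f := fun t : ℝ => (σ + t * Complex.I : ℂ)) (hg _ (by simpa using hσ)).continuousAt (by fun_prop)
  have hint : ∀ σ : ℝ, c ≤ σ → σ ≤ d → Integrable fun t : ℝ => g (σ + t * Complex.I) := by
    intro σ h1 h2
    refine (decay_int.const_mul K).mono' (hcont σ h1).aestronglyMeasurable ?_
    filter_upwards with t using hK σ t h1 h2
  have hN : Tendsto (fun N : ℕ => (N:ℝ)) atTop atTop := tendsto_natCast_atTop_atTop
  have hN' : Tendsto (fun N : ℕ => -(N:ℝ)) atTop atBot := tendsto_neg_atTop_atBot.comp hN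
  have l1 := intervalIntegral_tendsto_integral (hint d hcd le_rfl) hN' hN
  have l2 := intervalIntegral_tendsto_integral (hint c le_rfl hcd) hN' hN
  have hz : Tendsto (fun N : ℕ => K * (1 + (N:ℝ))^(-3/2:ℝ) * (d - c) + K * (1 + (N:ℝ))^(-3/2:ℝ) * (d - c)) atTop (𝓝 0) := by
    have h1 : Tendsto (fun N : ℕ => (1 + (N:ℝ))^(-3/2:ℝ)) atTop (𝓝 0) := by
      have := tendsto_rpow_neg_atTop (y := 3/2) (by norm_num)
      have h2 := this.comp (tendsto_atTop_add_const_left _ (1:ℝ) hN)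
      simpa [neg_div, Function.comp_def] using h2
    have h3 := (h1.const_mul K).mul_const (d - c)
    rw [mul_zero, zero_mul] at h3
    simpa using h3.add h3
  have hdiff : Tendsto (fun N : ℕ => (∫ t in (-(N:ℝ))..N, g (d + t * Complex.I)) - ∫ t in (-(N:ℝ))..N, g (c + t * Complex.I)) atTop (𝓝 0) := by
    refine squeeze_zero_norm (fun N => ?_) hz
    have hr := Complex.integral_boundary_rect_eq_zero_of_differentiableOn g (⟨c, -(N:ℝ)⟩ : ℂ) (⟨d, (N:ℝ)⟩ : ℂ) (by
      intro s hs
      refine (hg s ?_).differentiableWithinAt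
      have := (Complex.mem_reProdIm.1 hs).1
      simp only [uIcc_of_le hcd] at this
      exact this.1)
    simp only at hr
    have b : ∀ y : ℝ, |y| = N → ‖∫ x in c..d, g (x + y * Complex.I)‖ ≤ K * (1 + (N:ℝ))^(-3/2:ℝ) * (d - c) := by
      intro y hy
      have := intervalIntegral.norm_integral_le_of_norm_le_const (a := c) (b := d) (f := fun x : ℝ => g (x + y * Complex.I)) (C := K * (1 + (N:ℝ))^(-3/2:ℝ)) (by
        intro x hx
        rw [uIoc_of_le hcd] at hx
        have := hK x y hx.1.le hx.2
        rwa [hy] at this)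
      rwa [abs_of_nonneg (by linarith)] at this
    have b1 := b (-(N:ℝ)) (by simp)
    have b2 := b N (by simp)
    set I1 := ∫ x in c..d, g (x + ((-(N:ℝ) : ℝ) : ℂ) * Complex.I)
    set I2 := ∫ x in c..d, g (x + ((N:ℝ) : ℂ) * Complex.I)
    set J1 := ∫ t in (-(N:ℝ))..N, g (d + t * Complex.I)
    set J2 := ∫ t in (-(N:ℝ))..N, g (c + t * Complex.I)
    have e : J1 - J2 = Complex.I * (I1 - I2) := by
      have h5 : Complex.I * (J1 - J2) = -(I1 - I2) := by
        simp only [smul_eq_mul] at hr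
        linear_combination hr
      have := Complex.I_mul_I
      linear_combination (-Complex.I) * h5 + (J1 - J2) * this
    rw [e, norm_mul, Complex.norm_I, one_mul]
    exact (norm_sub_le _ _).trans (add_le_add b1 b2)
  have := tendsto_nhds_unique hdiff (l1.sub l2)
  exact (sub_eq_zero.1 this.symm)

open MeasureTheory in
lemma perron_c (hRH : RiemannHypothesis) {x : ℝ} (hx : 1 ≤ x) {c : ℝ} (hc : 1/2 < c) (hc2 : c ≤ 2) :
    (E1 x : ℂ) = (1/(2*Real.pi)) • ∫ t : ℝ, (x:ℂ)^(c + t * Complex.I : ℂ) * (PP (c + t * Complex.I) / (c + t * Complex.I)^2) := by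
  have hx0 : 0 < x := by linarith
  rw [perron2 hRH hx0]
  congr 1
  obtain ⟨K, hK, h⟩ := PP_decay hRH (δ := min (c - 1/2) (1/2)) (lt_min (by linarith) (by norm_num)) (min_le_right _ _)
  refine shift_line (g := fun s => (x:ℂ)^s * (PP s / s^2)) (K := x^2 * K) hc2 ?_ ?_
  · intro s hs
    have hs0 : s ≠ 0 := by rintro rfl; simp at hs; linarith
    have h1 := PP_analytic hRH (s := s) (by linarith)
    have h2 : DifferentiableAt ℂ (fun s => (x:ℂ)^s) s := by
      refine DifferentiableAt.const_cpow (by fun_prop) (Or.inl ?_)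
      exact_mod_cast hx0.ne'
    exact h2.mul (h1.div (by fun_prop) (pow_ne_zero _ hs0))
  · intro σ t h1 h2
    rw [norm_mul, Complex.norm_cpow_eq_rpow_re_of_pos hx0, mul_assoc]
    refine mul_le_mul ?_ (h σ t (by have := min_le_left (c-1/2) (1/2); linarith) h2) (norm_nonneg _) (by positivity)
    have := Real.rpow_le_rpow_of_exponent_le hx (show (σ + t * Complex.I : ℂ).re ≤ 2 by simpa using h2)
    rwa [Real.rpow_two] at this

lemma exp_diff {κ a : ℝ} (hκ : |κ| ≤ 1) (ha : 0 < a) (ha1 : a ≤ 1) {s : ℂ} (h1 : 0 ≤ s.re) (h2 : s.re ≤ 1) :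
    ‖Complex.exp (κ * s) - 1‖ ≤ 4 * (|κ| * ‖s‖)^(1-a) := by
  have hn : ‖(κ:ℂ) * s‖ = |κ| * ‖s‖ := by rw [norm_mul, Complex.norm_real, Real.norm_eq_abs]
  by_cases h : |κ| * ‖s‖ ≤ 1
  · have h3 := Complex.norm_exp_sub_one_le (x := κ * s) (by rwa [hn])
    rw [hn] at h3
    have h4 : |κ| * ‖s‖ ≤ (|κ| * ‖s‖)^(1-a) := by
      rcases (mul_nonneg (abs_nonneg κ) (norm_nonneg s)).eq_or_lt with h0 | h0
      · rw [← h0]; positivity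
      · have := Real.rpow_le_rpow_of_exponent_ge h0 h (show 1 - a ≤ 1 by linarith)
        rwa [Real.rpow_one] at this
    have : 0 ≤ (|κ| * ‖s‖)^(1-a) := by positivity
    linarith
  · push Not at h
    have h3 : 1 ≤ (|κ| * ‖s‖)^(1-a) := Real.one_le_rpow h.le (by linarith)
    have h4 : ‖Complex.exp (κ * s)‖ ≤ 3 := by
      rw [Complex.norm_exp]
      have : (κ * s : ℂ).re ≤ 1 := by
        simp
        have := (abs_le.1 hκ).2
        nlinarith
      refine (Real.exp_le_exp.2 this).trans ?_
      have := Real.exp_one_lt_d9; linarith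
    refine (norm_sub_le _ _).trans ?_
    rw [norm_one]; linarith

open MeasureTheory in
lemma E1_diff (hRH : RiemannHypothesis) : ∃ K : ℝ, 0 < K ∧ ∀ δ a x κ : ℝ, 0 < δ → δ ≤ 1/2 → 0 < a → a ≤ 1 → 1 ≤ x → |κ| ≤ 1 →
    1 ≤ x * Real.exp κ → |E1 (x * Real.exp κ) - E1 x| ≤ K * x^(1/2+δ) * |κ|^(1-a) / (δ * a^2) := by
  obtain ⟨K, hK, h⟩ := PP_weight hRH
  refine ⟨36 * K, by positivity, fun δ a x κ hδ hδ2 ha ha1 hx hκ hxκ => ?_⟩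
  obtain ⟨hi, hle⟩ := h δ a hδ hδ2 ha ha1
  have hx0 : 0 < x := by linarith
  have hx' : (x:ℂ) ≠ 0 := by exact_mod_cast hx0.ne'
  have p1 := perron_c hRH hx (c := 1/2 + δ) (by linarith) (by linarith)
  have p2 := perron_c hRH hxκ (c := 1/2 + δ) (by linarith) (by linarith)
  have hli := PP_line_int hRH (c := 1/2 + δ) (by linarith) (by linarith)
  have hint : ∀ y : ℝ, 0 < y → Integrable (fun t : ℝ => (y:ℂ)^((1/2+δ:ℝ) + t * Complex.I : ℂ) * (PP ((1/2+δ:ℝ) + t * Complex.I) / ((1/2+δ:ℝ) + t * Complex.I)^2)) := by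
    intro y hy
    have hy' : (y:ℂ) ≠ 0 := by exact_mod_cast hy.ne'
    refine hli.bdd_mul (c := y^(1/2+δ)) (Continuous.aestronglyMeasurable ?_) ?_
    · exact Continuous.const_cpow (by fun_prop) (Or.inl hy')
    · filter_upwards with t
      rw [Complex.norm_cpow_eq_rpow_re_of_pos hy]; simp
  have e : ((E1 (x * Real.exp κ) - E1 x : ℝ) : ℂ) = (1/(2*Real.pi)) • ∫ t : ℝ, ((x:ℂ)^((1/2+δ:ℝ) + t * Complex.I : ℂ) * (Complex.exp (κ * ((1/2+δ:ℝ) + t * Complex.I)) - 1)) * (PP ((1/2+δ:ℝ) + t * Complex.I) / ((1/2+δ:ℝ) + t * Complex.I)^2) := by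
    rw [Complex.ofReal_sub, p1, p2, ← smul_sub, ← integral_sub (hint _ (by positivity)) (hint _ hx0)]
    congr 2
    funext t
    rw [Complex.ofReal_mul, Complex.mul_cpow_ofReal_nonneg hx0.le (Real.exp_pos _).le]
    have : ((Real.exp κ : ℝ) : ℂ)^((1/2+δ:ℝ) + t * Complex.I : ℂ) = Complex.exp (κ * ((1/2+δ:ℝ) + t * Complex.I)) := by
      rw [Complex.cpow_def_of_ne_zero (by exact_mod_cast (Real.exp_pos κ).ne'), ← Complex.ofReal_log (Real.exp_pos _).le, Real.log_exp]
    rw [this]; ring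
  have hb : ‖∫ t : ℝ, ((x:ℂ)^((1/2+δ:ℝ) + t * Complex.I : ℂ) * (Complex.exp (κ * ((1/2+δ:ℝ) + t * Complex.I)) - 1)) * (PP ((1/2+δ:ℝ) + t * Complex.I) / ((1/2+δ:ℝ) + t * Complex.I)^2)‖ ≤
      ∫ t : ℝ, (36 * x^(1/2+δ) * |κ|^(1-a)) * (‖PP ((1/2 + δ : ℝ) + t * Complex.I)‖ * (1+|t|)^(-1-a)) := by
    refine norm_integral_le_of_norm_le (hi.const_mul _) ?_
    filter_upwards with t
    set s : ℂ := ((1/2+δ:ℝ) + t * Complex.I : ℂ) with hs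
    have hre : s.re = 1/2 + δ := by simp [hs]
    have him : s.im = t := by simp [hs]
    have e1 := exp_diff hκ ha ha1 (s := s) (by linarith) (by linarith)
    have ht := abs_nonneg t
    have hn : (1+|t|)/3 ≤ ‖s‖ := by
      have e1 := Complex.abs_re_le_norm s
      have e2 := Complex.abs_im_le_norm s
      rw [hre] at e1
      rw [him] at e2
      have := le_abs_self (1/2 + δ)
      linarith
    have hs0 : 0 < ‖s‖ := lt_of_lt_of_le (by positivity) hn
    have h3 : ‖s‖^(1-a) / ‖s‖^2 ≤ 9 * (1+|t|)^(-1-a) := by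
      rw [← Real.rpow_two, ← Real.rpow_sub hs0]
      have h4 : ‖s‖^(1-a-2) ≤ ((1+|t|)/3)^(1-a-2) := Real.rpow_le_rpow_of_nonpos (by positivity) hn (by linarith)
      refine h4.trans ?_
      rw [Real.div_rpow (by positivity) (by norm_num), show 1-a-2 = -1-a by ring, div_eq_mul_inv, ← Real.rpow_neg (by norm_num), mul_comm]
      gcongr
      have := Real.rpow_le_rpow_of_exponent_le (x := 3) (by norm_num) (show -(-1-a) ≤ 2 by linarith)
      rw [Real.rpow_two] at this; linarith
    rw [norm_mul, norm_mul, norm_div, norm_pow, Complex.norm_cpow_eq_rpow_re_of_pos hx0, hre]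
    calc x^(1/2+δ) * ‖Complex.exp (κ * s) - 1‖ * (‖PP s‖ / ‖s‖^2) ≤ x^(1/2+δ) * (4 * (|κ| * ‖s‖)^(1-a)) * (‖PP s‖ / ‖s‖^2) := by gcongr
      _ = 4 * x^(1/2+δ) * |κ|^(1-a) * ‖PP s‖ * (‖s‖^(1-a) / ‖s‖^2) := by
        rw [Real.mul_rpow (abs_nonneg _) (norm_nonneg _)]; ring
      _ ≤ 4 * x^(1/2+δ) * |κ|^(1-a) * ‖PP s‖ * (9 * (1+|t|)^(-1-a)) := by gcongr
      _ = _ := by ring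
  rw [integral_const_mul] at hb
  have hpi : (1/(2*Real.pi)) ≤ 1 := by
    rw [div_le_one (by positivity)]
    have := Real.pi_gt_three; linarith
  have e2 : |E1 (x * Real.exp κ) - E1 x| = ‖((E1 (x * Real.exp κ) - E1 x : ℝ) : ℂ)‖ := by rw [Complex.norm_real, Real.norm_eq_abs]
  rw [e2, e, norm_smul, Real.norm_of_nonneg (by positivity)]
  calc _ ≤ 1 * ((36 * x^(1/2+δ) * |κ|^(1-a)) * (K / (δ * a^2))) := by
        gcongr
        exact hb.trans (by gcongr)
    _ = _ := by ring

lemma mm_mono_diff {u v : ℝ} (hu : 1 ≤ u) (huv : u ≤ v) : mm v - mm u ≤ (v - u) * Real.log v ∧ mm u ≤ mm v := by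
  have hu0 : 0 < u := by linarith
  have hv0 : 0 < v := by linarith
  have h1 : Real.log v - Real.log u ≤ v / u - 1 := by
    rw [← Real.log_div hv0.ne' hu0.ne']
    exact Real.log_le_sub_one_of_pos (by positivity)
  have h2 : u * (Real.log v - Real.log u) ≤ v - u := by
    calc u * (Real.log v - Real.log u) ≤ u * (v/u - 1) := by gcongr
      _ = _ := by field_simp
  have h3 : Real.log u - Real.log v ≤ u / v - 1 := by
    rw [← Real.log_div hu0.ne' hv0.ne']
    exact Real.log_le_sub_one_of_pos (by positivity)
  have h4 : v * (Real.log u - Real.log v) ≤ u - v := by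
    calc v * (Real.log u - Real.log v) ≤ v * (u/v - 1) := by gcongr
      _ = _ := by field_simp
  have h5 := Real.log_nonneg hu
  unfold mm
  constructor
  · nlinarith
  · nlinarith

open MeasureTheory in
lemma E1_sandwich {u v : ℝ} (hu : 1 ≤ u) (huv : u ≤ v) :
    (AA u - mm v) * Real.log (v / u) ≤ E1 v - E1 u ∧ E1 v - E1 u ≤ (AA v - mm u) * Real.log (v / u) := by
  have hu0 : 0 < u := by linarith
  have hv0 : 0 < v := by linarith
  have hE : E1 v - E1 u = ∫ t in u..v, ee t := by
    rw [E1, E1, intervalIntegral.integral_interval_sub_left (ee_int _ _) (ee_int _ _)]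
  have hI : ∀ c : ℝ, ∫ t in u..v, c * t⁻¹ = c * Real.log (v/u) := by
    intro c
    rw [intervalIntegral.integral_const_mul, integral_inv_of_pos hu0 hv0]
  have hint : ∀ c : ℝ, IntervalIntegrable (fun t => c * t⁻¹) volume u v := by
    intro c
    refine (intervalIntegral.intervalIntegrable_inv (fun t ht => ?_) continuousOn_id).const_mul c
    rw [Set.uIcc_of_le huv] at ht
    exact (lt_of_lt_of_le hu0 ht.1).ne'
  rw [hE, ← hI, ← hI]
  constructor
  · refine intervalIntegral.integral_mono_on_of_le_Ioo huv (hint _) (ee_int _ _) fun t ht => ?_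
    have ht1 : 1 < t := lt_of_le_of_lt hu ht.1
    rw [ee_of_gt ht1, EE, div_eq_mul_inv]
    have h1 := AA_mono ht.1.le
    have h2 := (mm_mono_diff ht1.le ht.2.le).2
    have : 0 < t⁻¹ := by positivity
    gcongr
  · refine intervalIntegral.integral_mono_on_of_le_Ioo huv (ee_int _ _) (hint _) fun t ht => ?_
    have ht1 : 1 < t := lt_of_le_of_lt hu ht.1
    rw [ee_of_gt ht1, EE, div_eq_mul_inv]
    have h1 := AA_mono ht.2.le
    have h2 := (mm_mono_diff hu ht.1.le).2
    have : 0 < t⁻¹ := by positivity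
    gcongr

lemma AA_asymp_large (hRH : RiemannHypothesis) : ∃ C : ℝ, 0 < C ∧ ∀ x : ℝ, 2 ≤ Real.log x → 1 ≤ x →
    |AA x - mm x| ≤ C * Real.sqrt x * (Real.log x)^3 := by
  obtain ⟨K, hK, h⟩ := E1_diff hRH
  refine ⟨9 * K + 2, by positivity, fun x hl hx => ?_⟩
  have hx0 : 0 < x := by linarith
  set l := Real.log x with hldef
  have hl0 : 0 < l := by linarith
  have hx3 : 3 ≤ x := by
    have := Real.log_le_sub_one_of_pos hx0; linarith
  have hsq : Real.sqrt x * Real.sqrt x = x := Real.mul_self_sqrt hx0.le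
  have hsp : 0 < Real.sqrt x := Real.sqrt_pos.2 hx0
  have hs1 : 1 ≤ Real.sqrt x := by rw [Real.one_le_sqrt]; exact hx
  set η := (Real.sqrt x)⁻¹ with hη
  have hη0 : 0 < η := by positivity
  have hη1 : η ≤ 1 := inv_le_one_of_one_le₀ hs1
  have hxη : x * η = Real.sqrt x := by
    rw [hη]; nth_rewrite 1 [← hsq]; field_simp
  -- the bound
  have hB : ∀ κ : ℝ, |κ| = η → 1 ≤ x * Real.exp κ → |E1 (x * Real.exp κ) - E1 x| ≤ 9 * K * l^3 := by
    intro κ hκ hκ1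
    have := h (1/l) (1/l) x κ (by positivity) (by rw [div_le_div_iff₀ hl0 (by norm_num)]; linarith) (by positivity) (by rw [div_le_one hl0]; linarith) hx (by rw [hκ]; exact hη1) hκ1
    refine this.trans ?_
    rw [hκ]
    have hxl : x^(1/l) = Real.exp 1 := by
      rw [Real.rpow_def_of_pos hx0, ← hldef]; congr 1; field_simp
    have e1 : x^(1/2+1/l) = Real.sqrt x * Real.exp 1 := by
      rw [Real.rpow_add hx0, hxl, ← Real.sqrt_eq_rpow]
    have e2 : η^(1-1/l) = η * Real.exp (1/2) := by
      rw [Real.rpow_def_of_pos hη0, hη, Real.log_inv, Real.log_sqrt hx0.le, ← hldef]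
      have : -(l/2) * (1-1/l) = -(l/2) + 1/2 := by field_simp; ring
      rw [this, Real.exp_add]
      congr 1
      rw [Real.exp_neg, inv_inj]
      rw [Real.sqrt_eq_rpow, Real.rpow_def_of_pos hx0, ← hldef]; congr 1; ring
    rw [e1, e2]
    have e3 : Real.exp (1/2) ≤ 3 := by
      refine (Real.exp_le_exp.2 (show (1/2:ℝ) ≤ 1 by norm_num)).trans ?_
      have := Real.exp_one_lt_d9; linarith
    have e4 : Real.exp 1 ≤ 3 := by have := Real.exp_one_lt_d9; linarith
    have e5 : K * (Real.sqrt x * Real.exp 1) * (η * Real.exp (1/2)) / (1/l * (1/l)^2) = K * (Real.exp 1 * Real.exp (1/2)) * l^3 := by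
      have : Real.sqrt x * η = 1 := by rw [hη]; field_simp
      have e7 : 1/l * (1/l)^2 = (l^3)⁻¹ := by field_simp
      rw [e7, div_inv_eq_mul]
      linear_combination (K * Real.exp 1 * Real.exp (1/2) * l^3) * this
    rw [e5]
    have e6 : Real.exp 1 * Real.exp (1/2) ≤ 3 * 3 := by gcongr
    calc K * (Real.exp 1 * Real.exp (1/2)) * l^3 ≤ K * (3*3) * l^3 := by gcongr
      _ = _ := by ring
  have hl3 : l ≤ l^3 := by nlinarith [sq_nonneg l, sq_nonneg (l-1)]
  have hl13 : l + 1 ≤ l^3 := by nlinarith [sq_nonneg l, sq_nonneg (l-1)]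
  rw [abs_le]
  constructor
  · -- lower
    have hexp : 1 - η ≤ Real.exp (-η) := by have := Real.add_one_le_exp (-η); linarith
    have hxe : x - Real.sqrt x ≤ x * Real.exp (-η) := by
      calc x - Real.sqrt x = x * (1 - η) := by rw [mul_sub, hxη, mul_one]
        _ ≤ _ := by gcongr
    have h1u : 1 ≤ x * Real.exp (-η) := by
      have : Real.sqrt x ≤ x - 1 := by
        rw [Real.sqrt_le_left (by linarith)]; nlinarith
      linarith
    have huv : x * Real.exp (-η) ≤ x := by
      have : Real.exp (-η) ≤ 1 := Real.exp_le_one_iff.2 (by linarith)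
      nlinarith
    have hb := hB (-η) (by rw [abs_neg, abs_of_pos hη0]) h1u
    have hs := (E1_sandwich h1u huv).2
    have hlog : Real.log (x / (x * Real.exp (-η))) = η := by
      rw [show x / (x * Real.exp (-η)) = Real.exp η by rw [Real.exp_neg]; field_simp, Real.log_exp]
    rw [hlog] at hs
    have hm := (mm_mono_diff h1u huv).1
    have hm2 : mm x - mm (x * Real.exp (-η)) ≤ Real.sqrt x * l := by
      refine hm.trans ?_
      gcongr; linarith
    have h5 : -(9 * K * l^3) ≤ (AA x - mm (x * Real.exp (-η))) * η := by
      have := (abs_le.1 hb).2; linarith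
    have h6 : -(9 * K * l^3) * Real.sqrt x ≤ AA x - mm (x * Real.exp (-η)) := by
      have := mul_le_mul_of_nonneg_right h5 hsp.le
      have e : (AA x - mm (x * Real.exp (-η))) * η * Real.sqrt x = AA x - mm (x * Real.exp (-η)) := by
        rw [hη]; field_simp
      linarith
    have h7 : Real.sqrt x * l ≤ Real.sqrt x * l^3 := by gcongr
    have h8 : 0 ≤ Real.sqrt x * l^3 := by positivity
    nlinarith
  · have hexp : Real.exp η ≤ 1 + 2 * η := by
      have := Real.abs_exp_sub_one_le (x := η) (by rwa [abs_of_pos hη0])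
      rw [abs_of_pos hη0] at this
      have := (abs_le.1 this).2; linarith
    have huv : x ≤ x * Real.exp η := by
      have : 1 ≤ Real.exp η := Real.one_le_exp hη0.le
      nlinarith
    have hb := hB η (abs_of_pos hη0) (by linarith)
    have hs := (E1_sandwich hx huv).1
    have hlog : Real.log (x * Real.exp η / x) = η := by
      rw [show x * Real.exp η / x = Real.exp η by field_simp, Real.log_exp]
    rw [hlog] at hs
    have hm := (mm_mono_diff hx huv).1
    have hlv : Real.log (x * Real.exp η) = l + η := by
      rw [Real.log_mul hx0.ne' (Real.exp_pos _).ne', Real.log_exp]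
    have hxe : x * Real.exp η - x ≤ 2 * Real.sqrt x := by
      calc x * Real.exp η - x ≤ x * (1 + 2 * η) - x := by gcongr
        _ = 2 * (x * η) := by ring
        _ = _ := by rw [hxη]
    have hm2 : mm (x * Real.exp η) - mm x ≤ 2 * Real.sqrt x * (l + 1) := by
      refine hm.trans ?_
      rw [hlv]
      have : 0 ≤ l + η := by positivity
      gcongr
    have h5 : (AA x - mm (x * Real.exp η)) * η ≤ 9 * K * l^3 := by
      have := (abs_le.1 hb).2; linarith
    have h6 : AA x - mm (x * Real.exp η) ≤ (9 * K * l^3) * Real.sqrt x := by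
      have := mul_le_mul_of_nonneg_right h5 hsp.le
      have e : (AA x - mm (x * Real.exp η)) * η * Real.sqrt x = AA x - mm (x * Real.exp η) := by
        rw [hη]; field_simp
      linarith
    have h7 : 2 * Real.sqrt x * (l + 1) ≤ 2 * Real.sqrt x * l^3 := by gcongr
    nlinarith

lemma AA_asymp (hRH : RiemannHypothesis) : ∃ C : ℝ, 0 < C ∧ ∀ x : ℝ, 2 ≤ x →
    |AA x - mm x| ≤ C * Real.sqrt x * (Real.log x)^3 := by
  obtain ⟨C, hC, h⟩ := AA_asymp_large hRH
  refine ⟨C + 14 * 9^2 * 8, by positivity, fun x hx => ?_⟩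
  have hl2 : 1/2 ≤ Real.log x := by
    have := Real.log_two_gt_d9
    have h2 := Real.log_le_log (by norm_num) hx
    linarith
  have hs : 1 ≤ Real.sqrt x := by rw [Real.one_le_sqrt]; linarith
  by_cases hl : 2 ≤ Real.log x
  · refine (h x hl (by linarith)).trans ?_
    gcongr
    norm_num
  · push Not at hl
    have hx9 : x ≤ 9 := by
      have h1 : x < Real.exp 2 := by rwa [← Real.log_lt_iff_lt_exp (by linarith)]
      have h2 : Real.exp 2 = Real.exp 1 * Real.exp 1 := by rw [← Real.exp_add]; norm_num
      have h3 := Real.exp_one_lt_d9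
      have h4 := Real.exp_pos 1
      nlinarith
    have h1 := EE_abs_le (t := x) (by linarith)
    rw [EE] at h1
    have h2 : x^(3/2:ℝ) ≤ 9^2 := by
      calc x^(3/2:ℝ) ≤ x^(2:ℝ) := Real.rpow_le_rpow_of_exponent_le (by linarith) (by norm_num)
        _ = x^2 := Real.rpow_two x
        _ ≤ 9^2 := by gcongr
    have h3 : (1/2)^3 ≤ (Real.log x)^3 := by gcongr
    calc _ ≤ 14 * x^(3/2:ℝ) := h1
      _ ≤ 14 * 9^2 := by gcongr
      _ = 14 * 9^2 * 8 * 1 * (1/2)^3 := by norm_num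
      _ ≤ (C + 14 * 9^2 * 8) * Real.sqrt x * (Real.log x)^3 := by
        gcongr
        linarith

lemma abelGen {a b : ℝ} (ha : 0 ≤ a) (hab : a ≤ b) (c : ℕ → ℝ) {f f' M w G : ℝ → ℝ}
    (hf : ∀ t ∈ Set.Icc a b, HasDerivAt f (f' t) t) (hf' : ContinuousOn f' (Set.Icc a b))
    (hM : ∀ t ∈ Set.Icc a b, HasDerivAt M (w t) t) (hw : ContinuousOn w (Set.Icc a b))
    (hG : IntervalIntegrable G MeasureTheory.volume a b)
    (hR : ∀ t ∈ Set.Icc a b, |f' t| * |∑ k ∈ Finset.Icc 0 ⌊t⌋₊, c k - M t| ≤ G t) :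
    |∑ k ∈ Finset.Ioc ⌊a⌋₊ ⌊b⌋₊, f k * c k - ∫ t in a..b, f t * w t|
      ≤ |f b| * |∑ k ∈ Finset.Icc 0 ⌊b⌋₊, c k - M b| + |f a| * |∑ k ∈ Finset.Icc 0 ⌊a⌋₊, c k - M a|
        + ∫ t in a..b, G t := by
  have hderiv : Set.EqOn (deriv f) f' (Set.Icc a b) := fun t ht => (hf t ht).deriv
  have hfint : MeasureTheory.IntegrableOn (deriv f) (Set.Icc a b) :=
    (hf'.congr hderiv).integrableOn_Icc
  have h1 := sum_mul_eq_sub_sub_integral_mul c ha hab (fun t ht => (hf t ht).differentiableAt) hfint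
  have huI : Set.uIcc a b = Set.Icc a b := Set.uIcc_of_le hab
  have hf'int : IntervalIntegrable f' MeasureTheory.volume a b :=
    ContinuousOn.intervalIntegrable (by rwa [huI])
  have hwint : IntervalIntegrable w MeasureTheory.volume a b :=
    ContinuousOn.intervalIntegrable (by rwa [huI])
  have h2 := intervalIntegral.integral_mul_deriv_eq_deriv_mul (u := f) (v := M) (u' := f') (v' := w)
    (a := a) (b := b) (by rwa [huI]) (by rwa [huI]) hf'int hwint
  have hMc : ContinuousOn M (Set.Icc a b) := fun t ht => (hM t ht).continuousAt.continuousWithinAt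
  have h3 : ∫ t in Set.Ioc a b, deriv f t * ∑ k ∈ Finset.Icc 0 ⌊t⌋₊, c k =
      ∫ t in a..b, f' t * ∑ k ∈ Finset.Icc 0 ⌊t⌋₊, c k := by
    rw [intervalIntegral.integral_of_le hab]
    refine MeasureTheory.setIntegral_congr_fun measurableSet_Ioc fun t ht => ?_
    rw [hderiv (Set.Ioc_subset_Icc_self ht)]
  have hi1 : IntervalIntegrable (fun t => f' t * ∑ k ∈ Finset.Icc 0 ⌊t⌋₊, c k) MeasureTheory.volume a b := by
    rw [intervalIntegrable_iff_integrableOn_Icc_of_le hab]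
    exact integrableOn_mul_sum_Icc c ha hf'.integrableOn_Icc
  have hi2 : IntervalIntegrable (fun t => f' t * M t) MeasureTheory.volume a b :=
    ContinuousOn.intervalIntegrable (by rw [huI]; exact hf'.mul hMc)
  have h4 : (∫ t in a..b, f' t * ∑ k ∈ Finset.Icc 0 ⌊t⌋₊, c k) - ∫ t in a..b, f' t * M t
      = ∫ t in a..b, f' t * (∑ k ∈ Finset.Icc 0 ⌊t⌋₊, c k - M t) := by
    rw [← intervalIntegral.integral_sub hi1 hi2]
    congr 1; ext t; ring
  have h5 : |∫ t in a..b, f' t * (∑ k ∈ Finset.Icc 0 ⌊t⌋₊, c k - M t)| ≤ ∫ t in a..b, G t := by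
    rw [← Real.norm_eq_abs]
    refine intervalIntegral.norm_integral_le_of_norm_le hab ?_ hG
    refine Filter.Eventually.of_forall fun t ht => ?_
    rw [Real.norm_eq_abs, abs_mul]
    exact hR t (Set.Ioc_subset_Icc_self ht)
  rw [h1, h2, h3]
  have e : f b * ∑ k ∈ Finset.Icc 0 ⌊b⌋₊, c k - f a * ∑ k ∈ Finset.Icc 0 ⌊a⌋₊, c k -
      (∫ t in a..b, f' t * ∑ k ∈ Finset.Icc 0 ⌊t⌋₊, c k) -
      (f b * M b - f a * M a - ∫ t in a..b, f' t * M t) =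
      f b * (∑ k ∈ Finset.Icc 0 ⌊b⌋₊, c k - M b) - f a * (∑ k ∈ Finset.Icc 0 ⌊a⌋₊, c k - M a)
      - ∫ t in a..b, f' t * (∑ k ∈ Finset.Icc 0 ⌊t⌋₊, c k - M t) := by
    rw [← h4]; ring
  rw [e]
  refine (abs_sub _ _).trans ?_
  refine add_le_add ((abs_sub _ _).trans ?_) h5
  rw [abs_mul, abs_mul]

noncomputable def pIf (g : ℕ → ℝ) (k : ℕ) : ℝ := if k.Prime then g k else 0

lemma BB_asymp (hRH : RiemannHypothesis) : ∃ C > 0, ∀ x ≥ (2:ℝ),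
    |∑ k ∈ Finset.Icc 0 ⌊x⌋₊, pIf (fun k => (Real.log k)^2) k - mm x| ≤ C * √x * (Real.log x)^3 := by
  obtain ⟨C, hC, h⟩ := AA_asymp hRH
  refine ⟨C + 4, by linarith, fun x hx => ?_⟩
  have hl2 : 1/2 ≤ Real.log x := by
    have := Real.log_two_gt_d9
    have h2 := Real.log_le_log (by norm_num) hx
    linarith
  have h1 := h x hx
  have h0 : AA x - ∑ k ∈ Finset.Icc 0 ⌊x⌋₊, pIf (fun k => (Real.log k)^2) k
      = ∑ n ∈ Finset.Ioc 0 ⌊x⌋₊ with ¬ n.Prime, Real.log n * ArithmeticFunction.vonMangoldt n := by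
    have e1 : Finset.Icc 0 ⌊x⌋₊ = insert 0 (Finset.Icc 1 ⌊x⌋₊) := by
      ext k; simp only [Finset.mem_Icc, Finset.mem_insert]; omega
    have e2 : Finset.Ioc 0 ⌊x⌋₊ = Finset.Icc 1 ⌊x⌋₊ := by
      ext k; simp only [Finset.mem_Icc, Finset.mem_Ioc]; omega
    rw [e1, Finset.sum_insert (by simp), e2, AA, Finset.sum_filter]
    have : pIf (fun k => (Real.log k)^2) 0 = 0 := by simp [pIf]
    rw [this, zero_add, ← Finset.sum_sub_distrib]
    refine Finset.sum_congr rfl fun k _ => ?_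
    by_cases hk : k.Prime
    · simp only [pIf, hk, if_true, not_true, if_false, ArithmeticFunction.vonMangoldt_apply_prime hk]
      ring
    · simp [pIf, hk]
  have hb0 : 0 ≤ AA x - ∑ k ∈ Finset.Icc 0 ⌊x⌋₊, pIf (fun k => (Real.log k)^2) k := by
    rw [h0]
    exact Finset.sum_nonneg fun k _ => mul_nonneg (Real.log_natCast_nonneg k) ArithmeticFunction.vonMangoldt_nonneg
  have hb1 : AA x - ∑ k ∈ Finset.Icc 0 ⌊x⌋₊, pIf (fun k => (Real.log k)^2) k ≤ Real.log x * (2 * √x * Real.log x) := by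
    rw [h0]
    refine le_trans ?_ (mul_le_mul_of_nonneg_left (Chebyshev.psi_sub_theta_le (x := x) (by linarith)) (by linarith))
    rw [Chebyshev.psi_sub_theta_eq_sum_not_prime, Finset.mul_sum]
    refine Finset.sum_le_sum fun k hk => ?_
    refine mul_le_mul_of_nonneg_right ?_ ArithmeticFunction.vonMangoldt_nonneg
    simp only [Finset.mem_filter, Finset.mem_Ioc] at hk
    exact Real.log_le_log (by exact_mod_cast hk.1.1) ((Nat.le_floor_iff (by linarith)).1 hk.1.2)
  have hb2 : Real.log x * (2 * √x * Real.log x) ≤ 4 * √x * (Real.log x)^3 := by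
    have : 0 ≤ √x * (Real.log x)^2 := by positivity
    nlinarith
  rw [abs_le] at h1 ⊢
  constructor <;> linarith [h1.1, h1.2]

noncomputable def LL (x : ℝ) : ℝ := ∫ u in (2:ℝ)..x, (Real.log u)⁻¹
noncomputable def piR (x : ℝ) : ℝ := ∑ k ∈ Finset.Icc 0 ⌊x⌋₊, pIf (fun _ => 1) k

lemma mm_hasDeriv {t : ℝ} (ht : 0 < t) : HasDerivAt mm (Real.log t) t := by
  have h := ((((hasDerivAt_id t).mul (Real.hasDerivAt_log ht.ne')).sub (hasDerivAt_id t)).add_const (1:ℝ))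
  have e : 1 * Real.log t + id t * t⁻¹ - 1 = Real.log t := by simp [ht.ne']
  rw [e] at h
  exact h

lemma int_rpow_neg_half {a b : ℝ} (_ : 0 < a) (_ : a ≤ b) :
    ∫ t in a..b, t^(-(1/2):ℝ) = 2 * (√b - √a) := by
  rw [integral_rpow (Or.inl (by norm_num))]
  rw [Real.sqrt_eq_rpow, Real.sqrt_eq_rpow]; norm_num; ring

lemma log_ne {t : ℝ} (ht : 1 < t) : Real.log t ≠ 0 := (Real.log_pos ht).ne'

lemma piR_asymp (hRH : RiemannHypothesis) : ∃ K > 0, ∀ x ≥ (2:ℝ),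
    |piR x - LL x| ≤ K * √x * Real.log x := by
  obtain ⟨C, hC, h⟩ := BB_asymp hRH
  refine ⟨10 * C + 2, by linarith, fun x hx => ?_⟩
  have hlt : ∀ t : ℝ, 2 ≤ t → 1/2 ≤ Real.log t := by
    intro t ht
    have := Real.log_two_gt_d9
    have h2 := Real.log_le_log (by norm_num) ht
    linarith
  have key := abelGen (a := 2) (b := x) (by norm_num) hx (pIf (fun k => (Real.log k)^2))
    (f := fun t => ((Real.log t)^2)⁻¹) (f' := fun t => -(2 * Real.log t * t⁻¹) / ((Real.log t)^2)^2)
    (M := mm) (w := Real.log) (G := fun t => (2 * C) * t^(-(1/2):ℝ)) ?_ ?_ ?_ ?_ ?_ ?_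
  · have hx0 : 0 < x := by linarith
    have e1 : ∑ k ∈ Finset.Ioc ⌊(2:ℝ)⌋₊ ⌊x⌋₊, ((Real.log k)^2)⁻¹ * pIf (fun k => (Real.log k)^2) k = piR x - 1 := by
      have hfx : 2 ≤ ⌊x⌋₊ := Nat.le_floor (by exact_mod_cast hx)
      have e1 : Finset.Icc 0 ⌊x⌋₊ = insert 0 (insert 1 (insert 2 (Finset.Ioc 2 ⌊x⌋₊))) := by
        ext k; simp only [Finset.mem_Icc, Finset.mem_insert, Finset.mem_Ioc]; omega
      rw [piR, e1, Finset.sum_insert (by simp), Finset.sum_insert (by simp), Finset.sum_insert (by simp)]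
      have h2 : ⌊(2:ℝ)⌋₊ = 2 := by norm_num
      rw [h2]
      have : pIf (fun _ => 1) 0 = 0 := if_neg Nat.not_prime_zero
      rw [this]
      have : pIf (fun _ => 1) 1 = 0 := if_neg Nat.not_prime_one
      rw [this]
      have : pIf (fun _ => 1) 2 = 1 := by simp [pIf, Nat.prime_two]
      rw [this]
      have : ∑ k ∈ Finset.Ioc 2 ⌊x⌋₊, ((Real.log k)^2)⁻¹ * pIf (fun k => (Real.log k)^2) k
        = ∑ k ∈ Finset.Ioc 2 ⌊x⌋₊, pIf (fun _ => 1) k := by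
        refine Finset.sum_congr rfl fun k hk => ?_
        by_cases hp : k.Prime
        · simp only [pIf, hp, if_true]
          have := log_ne (t := k) (by exact_mod_cast hp.one_lt)
          field_simp
        · simp [pIf, hp]
      rw [this]; ring
    have e2 : ∫ t in (2:ℝ)..x, ((Real.log t)^2)⁻¹ * Real.log t = LL x := by
      rw [LL]
      refine intervalIntegral.integral_congr fun t ht => ?_
      rw [Set.uIcc_of_le hx] at ht
      have := log_ne (t := t) (by linarith [ht.1])
      field_simp
    rw [e1, e2] at key
    rw [intervalIntegral.integral_const_mul, int_rpow_neg_half (by norm_num) hx] at key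
    have g1 : |((Real.log x)^2)⁻¹| * |∑ k ∈ Finset.Icc 0 ⌊x⌋₊, pIf (fun k => (Real.log k)^2) k - mm x| ≤ C * √x * Real.log x := by
      have := hlt x hx
      rw [abs_of_nonneg (by positivity)]
      calc _ ≤ ((Real.log x)^2)⁻¹ * (C * √x * (Real.log x)^3) := by
            gcongr; exact h x hx
        _ = _ := by field_simp
    have g2 : |((Real.log 2)^2)⁻¹| * |∑ k ∈ Finset.Icc 0 ⌊(2:ℝ)⌋₊, pIf (fun k => (Real.log k)^2) k - mm 2| ≤ C * √2 * Real.log 2 := by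
      have := hlt 2 le_rfl
      rw [abs_of_nonneg (by positivity)]
      calc _ ≤ ((Real.log 2)^2)⁻¹ * (C * √2 * (Real.log 2)^3) := by
            gcongr; exact h 2 le_rfl
        _ = _ := by field_simp
    have g3 : C * √2 * Real.log 2 ≤ C * √x * Real.log x := by
      have : 0 ≤ Real.log 2 := by linarith [hlt 2 le_rfl]
      gcongr
    have hs : 1 ≤ √x := by rw [Real.one_le_sqrt]; linarith
    have hlx := hlt x hx
    have g4 : √x ≤ 2 * (√x * Real.log x) := by nlinarith
    have g5 : C * √x ≤ C * (2 * (√x * Real.log x)) := by gcongr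
    have g6 : 0 ≤ C * √2 := by positivity
    have g7 : |piR x - LL x| ≤ |piR x - 1 - LL x| + 1 := by
      have := abs_add_le (piR x - 1 - LL x) 1
      rw [abs_one] at this
      rwa [show piR x - 1 - LL x + 1 = piR x - LL x by ring] at this
    nlinarith
  · intro t ht
    have := log_ne (t := t) (by linarith [ht.1])
    have h1 := ((Real.hasDerivAt_log (x := t) (by linarith [ht.1])).pow 2).inv (pow_ne_zero 2 this)
    have e : (-(((2:ℕ):ℝ) * Real.log t ^ (2 - 1) * t⁻¹) / (Real.log ^ 2) t ^ 2) = -(2 * Real.log t * t⁻¹) / ((Real.log t)^2)^2 := by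
      simp
    rw [e] at h1
    exact h1
  · have hl : ContinuousOn Real.log (Set.Icc 2 x) := fun t ht => (Real.continuousAt_log (by linarith [ht.1])).continuousWithinAt
    refine ContinuousOn.div ?_ ?_ ?_
    · refine ((continuousOn_const.mul hl).mul (continuousOn_id.inv₀ ?_)).neg
      intro t ht; simp only [id]; linarith [ht.1]
    · exact (hl.pow 2).pow 2
    · intro t ht
      have := log_ne (t := t) (by linarith [ht.1])
      positivity
  · intro t ht; exact mm_hasDeriv (by linarith [ht.1])
  · exact fun t ht => (Real.continuousAt_log (by linarith [ht.1])).continuousWithinAt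
  · refine ContinuousOn.intervalIntegrable ?_
    rw [Set.uIcc_of_le hx]
    refine continuousOn_const.mul (fun t ht => ?_)
    exact (Real.continuousAt_rpow_const t _ (Or.inl (by linarith [ht.1]))).continuousWithinAt
  · intro t ht
    have ht0 : 0 < t := by linarith [ht.1]
    have hl := hlt t ht.1
    have h1 := h t ht.1
    have e : |-(2 * Real.log t * t⁻¹) / ((Real.log t)^2)^2| = 2 * t⁻¹ * ((Real.log t)^3)⁻¹ := by
      rw [neg_div, abs_neg, abs_of_nonneg (by positivity)]
      field_simp
    rw [e]
    calc _ ≤ 2 * t⁻¹ * ((Real.log t)^3)⁻¹ * (C * √t * (Real.log t)^3) := by gcongr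
      _ = 2 * C * (t⁻¹ * √t) := by field_simp
      _ = _ := by
        rw [Real.sqrt_eq_rpow, ← Real.rpow_neg_one, ← Real.rpow_add ht0]; norm_num

lemma sum_rpow_34 (N : ℕ) : ∑ k ∈ Finset.Icc 1 N, (k:ℝ)^(-(3/4):ℝ) ≤ 4 * (N:ℝ)^(1/4:ℝ) := by
  induction N with
  | zero => simp
  | succ N ih =>
    rw [Finset.sum_Icc_succ_top (by omega)]
    set u : ℝ := ((N+1:ℕ):ℝ)^(1/4:ℝ) with hu
    set v : ℝ := (N:ℝ)^(1/4:ℝ) with hv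
    have hu0 : 0 < u := by positivity
    have hv0 : 0 ≤ v := by positivity
    have hvu : v ≤ u := by
      rw [hu, hv]; gcongr; omega
    have hu4 : u^4 = (N:ℝ)+1 := by
      rw [hu, ← Real.rpow_natCast, ← Real.rpow_mul (by positivity)]; norm_num
    have hv4 : v^4 = N := by
      rw [hv, ← Real.rpow_natCast, ← Real.rpow_mul (by positivity)]; norm_num
    have e : ((N+1:ℕ):ℝ)^(-(3/4):ℝ) = (u^3)⁻¹ := by
      rw [hu, ← Real.rpow_natCast, ← Real.rpow_mul (by positivity), ← Real.rpow_neg (by positivity)]; norm_num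
    rw [e]
    have h1 : (u^3)⁻¹ ≤ 4 * (u - v) := by
      rw [inv_le_iff_one_le_mul₀ (by positivity)]
      have h2 : (u - v) * (u^3 + u^2*v + u*v^2 + v^3) = 1 := by linear_combination hu4 - hv4
      have h3 : u^3 + u^2*v + u*v^2 + v^3 ≤ 4 * u^3 := by
        have a1 : u^2*v ≤ u^2*u := by gcongr
        have a2 : u*v^2 ≤ u*u^2 := by gcongr
        have a3 : v^3 ≤ u^3 := by gcongr
        nlinarith
      nlinarith [mul_le_mul_of_nonneg_left h3 (sub_nonneg.2 hvu)]
    linarith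

lemma sum_log_prime_sqrt {y : ℝ} (hy : 1 ≤ y) :
    ∑ k ∈ Finset.Icc 1 ⌊y⌋₊, (k:ℝ)^(-(1/2):ℝ) * pIf (fun k => Real.log k) k ≤ 4 * √y := by
  have hy0 : 0 < y := by linarith
  have hth : ∀ t : ℝ, 1 ≤ t → |∑ k ∈ Finset.Icc 0 ⌊t⌋₊, pIf (fun k => Real.log k) k - 0| ≤ 2 * t := by
    intro t ht
    have h1 : ∑ k ∈ Finset.Icc 0 ⌊t⌋₊, pIf (fun k => Real.log k) k = Chebyshev.theta t := by
      rw [Chebyshev.theta_eq_sum_Icc, Finset.sum_filter]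
      rfl
    rw [h1, sub_zero, abs_of_nonneg (Chebyshev.theta_nonneg t)]
    refine (Chebyshev.theta_le_log4_mul_x (by linarith)).trans ?_
    have : Real.log 4 ≤ 2 := by
      rw [show (4:ℝ) = 2^2 by norm_num, Real.log_pow]
      have := Real.log_two_lt_d9
      push_cast; linarith
    gcongr
  have key := abelGen (a := 1) (b := y) (by norm_num) hy (pIf (fun k => Real.log k))
    (f := fun t => t^(-(1/2):ℝ)) (f' := fun t => (-(1/2)) * t^(-(1/2)-1:ℝ))
    (M := fun _ => 0) (w := fun _ => 0) (G := fun t => t^(-(1/2):ℝ)) ?_ ?_ ?_ ?_ ?_ ?_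
  · simp only [mul_zero, intervalIntegral.integral_zero, sub_zero] at key
    have h2 := hth y hy
    rw [sub_zero] at h2
    have h3 : ∑ k ∈ Finset.Icc 0 ⌊(1:ℝ)⌋₊, pIf (fun k => Real.log k) k = 0 := by
      refine Finset.sum_eq_zero fun k hk => ?_
      have : ¬ k.Prime := by
        intro hp
        have := hp.two_le
        simp at hk; omega
      exact if_neg this
    rw [h3, int_rpow_neg_half (by norm_num) hy, abs_zero, mul_zero, Real.sqrt_one] at key
    have h4 : |y^(-(1/2):ℝ)| * |∑ k ∈ Finset.Icc 0 ⌊y⌋₊, pIf (fun k => Real.log k) k| ≤ 2 * √y := by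
      rw [abs_of_nonneg (by positivity)]
      calc _ ≤ y^(-(1/2):ℝ) * (2*y) := by gcongr
        _ = 2 * (y^(-(1/2):ℝ) * y^(1:ℝ)) := by rw [Real.rpow_one]; ring
        _ = _ := by rw [← Real.rpow_add hy0, Real.sqrt_eq_rpow]; norm_num
    have e1 : Finset.Icc 1 ⌊y⌋₊ = insert 1 (Finset.Ioc 1 ⌊y⌋₊) := by
      have hfx : 1 ≤ ⌊y⌋₊ := Nat.le_floor (by exact_mod_cast hy)
      ext k; simp only [Finset.mem_Icc, Finset.mem_insert, Finset.mem_Ioc]; omega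
    rw [e1, Finset.sum_insert (by simp)]
    have h5 : pIf (fun k => Real.log k) 1 = 0 := if_neg Nat.not_prime_one
    rw [h5, mul_zero, zero_add]
    have h6 := le_abs_self (∑ k ∈ Finset.Ioc ⌊(1:ℝ)⌋₊ ⌊y⌋₊, (k:ℝ)^(-(1/2):ℝ) * pIf (fun k => Real.log k) k)
    rw [Nat.floor_one] at h6 key
    linarith
  · intro t ht
    exact Real.hasDerivAt_rpow_const (Or.inl (by linarith [ht.1]))
  · refine continuousOn_const.mul (fun t ht => ?_)
    exact (Real.continuousAt_rpow_const t _ (Or.inl (by linarith [ht.1]))).continuousWithinAt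
  · intro t ht; exact hasDerivAt_const t 0
  · exact continuousOn_const
  · refine ContinuousOn.intervalIntegrable ?_
    rw [Set.uIcc_of_le hy]
    refine (fun t ht => ?_)
    exact (Real.continuousAt_rpow_const t _ (Or.inl (by linarith [ht.1]))).continuousWithinAt
  · intro t ht
    have ht0 : 0 < t := by linarith [ht.1]
    rw [abs_mul, abs_neg, abs_of_pos (show (0:ℝ) < 1/2 by norm_num), abs_of_nonneg (by positivity : 0 ≤ t^(-(1/2)-1:ℝ))]
    calc _ ≤ 1/2 * t^(-(1/2)-1:ℝ) * (2 * t) := by gcongr; exact hth t ht.1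
      _ = t^(-(1/2)-1:ℝ) * t^(1:ℝ) := by rw [Real.rpow_one]; ring
      _ = _ := by rw [← Real.rpow_add ht0]; norm_num

lemma sum_prime_sqrt {y : ℝ} (hy : 1 ≤ y) :
    Real.log y * ∑ k ∈ Finset.Icc 1 ⌊y⌋₊, pIf (fun k => (k:ℝ)^(-(1/2):ℝ)) k ≤ 20 * √y := by
  have hy0 : 0 < y := by linarith
  have h1 := sum_log_prime_sqrt hy
  have h2 := sum_rpow_34 ⌊y⌋₊
  have h3 : Real.log y * ∑ k ∈ Finset.Icc 1 ⌊y⌋₊, pIf (fun k => (k:ℝ)^(-(1/2):ℝ)) k ≤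
     ∑ k ∈ Finset.Icc 1 ⌊y⌋₊, (k:ℝ)^(-(1/2):ℝ) * pIf (fun k => Real.log k) k
      + 4 * y^(1/4:ℝ) * ∑ k ∈ Finset.Icc 1 ⌊y⌋₊, (k:ℝ)^(-(3/4):ℝ) := by
    rw [Finset.mul_sum, Finset.mul_sum, ← Finset.sum_add_distrib]
    refine Finset.sum_le_sum fun k hk => ?_
    rw [Finset.mem_Icc] at hk
    have hk0 : (0:ℝ) < k := by exact_mod_cast hk.1
    by_cases hp : k.Prime
    · simp only [pIf, hp, if_true]
      have h4 : Real.log (y / k) ≤ (y/k)^(1/4:ℝ) / (1/4) := Real.log_le_rpow_div (by positivity) (by norm_num)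
      rw [Real.log_div hy0.ne' hk0.ne', Real.div_rpow hy0.le hk0.le] at h4
      have h5 : (k:ℝ)^(-(3/4):ℝ) = (k:ℝ)^(-(1/2):ℝ) / (k:ℝ)^(1/4:ℝ) := by
        rw [← Real.rpow_sub hk0]; norm_num
      rw [h5]
      have h6 : Real.log y ≤ Real.log k + 4 * (y^(1/4:ℝ) / (k:ℝ)^(1/4:ℝ)) := by linarith
      calc _ ≤ (Real.log k + 4 * (y^(1/4:ℝ) / (k:ℝ)^(1/4:ℝ))) * (k:ℝ)^(-(1/2):ℝ) := by gcongr
        _ = _ := by ring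
    · simp only [pIf, hp, if_false, mul_zero, zero_add]; positivity
  have h4 : (⌊y⌋₊:ℝ)^(1/4:ℝ) ≤ y^(1/4:ℝ) := by gcongr; exact Nat.floor_le hy0.le
  have h5 : y^(1/4:ℝ) * y^(1/4:ℝ) = √y := by
    rw [← Real.rpow_add hy0, Real.sqrt_eq_rpow]; norm_num
  have h6 : 0 ≤ y^(1/4:ℝ) := by positivity
  have h7 : ∑ k ∈ Finset.Icc 1 ⌊y⌋₊, (k:ℝ)^(-(3/4):ℝ) ≤ 4 * y^(1/4:ℝ) := by linarith
  have h8 := mul_le_mul_of_nonneg_left h7 h6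
  nlinarith

lemma NALG_eq {r x : ℝ} (hr : 1 < r) (hx : 0 < x) :
    (NALG r x : ℝ) = ∑ p ∈ Finset.Ioc ⌊√x / r⌋₊ ⌊√x⌋₊,
      (piR (x / p) - piR (x / (r * p))) * pIf (fun _ => 1) p := by
  have hr0 : 0 < r := by linarith
  have h1 : NALG r x = ∑ p ∈ (Finset.Ioc ⌊√x / r⌋₊ ⌊√x⌋₊).filter Nat.Prime,
      ((Finset.Ioc ⌊x / (r * (p:ℝ))⌋₊ ⌊x / (p:ℝ)⌋₊).filter Nat.Prime).card := by
    rw [NALG, ← Finset.card_sigma, ← Finset.card_map (Equiv.sigmaEquivProd ℕ ℕ).toEmbedding]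
    apply Nat.subtype_card
    rintro ⟨p, q⟩
    simp only [Finset.mem_map, Finset.mem_sigma, Finset.mem_filter, Finset.mem_Ioc, Equiv.coe_toEmbedding]
    have hA : ∀ n : ℕ, ⌊√x / r⌋₊ < n ↔ √x / r < n := fun n => Nat.floor_lt (by positivity)
    have hB : ∀ n : ℕ, n ≤ ⌊√x⌋₊ ↔ (n:ℝ) ≤ √x := fun n => Nat.le_floor_iff (by positivity)
    have hC : ∀ p n : ℕ, ⌊x / (r * (p:ℝ))⌋₊ < n ↔ x / (r * p) < n := fun p n => Nat.floor_lt (by positivity)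
    have hD : ∀ p n : ℕ, n ≤ ⌊x / (p:ℝ)⌋₊ ↔ (n:ℝ) ≤ x / p := fun p n => Nat.le_floor_iff (by positivity)
    simp only [hA, hB, hC, hD]
    constructor
    · rintro ⟨⟨p', q'⟩, h, he⟩
      simp only [Equiv.sigmaEquivProd, Equiv.coe_fn_mk, Prod.mk.injEq] at he
      obtain ⟨rfl, rfl⟩ := he
      tauto
    · intro h
      exact ⟨⟨p, q⟩, by tauto, rfl⟩
  rw [h1]
  push_cast
  rw [Finset.sum_filter]
  refine Finset.sum_congr rfl fun p hp => ?_
  by_cases hpp : p.Prime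
  · simp only [hpp, if_true, pIf, mul_one]
    have hp0 : (0:ℝ) < p := by exact_mod_cast hpp.pos
    have hle : ⌊x / (r * (p:ℝ))⌋₊ ≤ ⌊x / (p:ℝ)⌋₊ := by
      apply Nat.floor_le_floor
      gcongr
      nlinarith
    have e1 : Finset.Icc 0 ⌊x / (p:ℝ)⌋₊ = Finset.Icc 0 ⌊x / (r * (p:ℝ))⌋₊ ∪ Finset.Ioc ⌊x / (r * (p:ℝ))⌋₊ ⌊x / (p:ℝ)⌋₊ := by
      ext k; simp only [Finset.mem_Icc, Finset.mem_union, Finset.mem_Ioc]; omega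
    have hdj : Disjoint (Finset.Icc 0 ⌊x / (r * (p:ℝ))⌋₊) (Finset.Ioc ⌊x / (r * (p:ℝ))⌋₊ ⌊x / (p:ℝ)⌋₊) := by
      rw [Finset.disjoint_left]
      intro k; simp only [Finset.mem_Icc, Finset.mem_Ioc]; omega
    rw [piR, piR, e1, Finset.sum_union hdj, add_sub_cancel_left, Finset.card_filter]
    push_cast
    rfl
  · simp [hpp, pIf]

lemma LL_ii {u v : ℝ} (hu : 2 ≤ u) (hv : 2 ≤ v) :
    IntervalIntegrable (fun u => (Real.log u)⁻¹) MeasureTheory.volume u v := by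
  refine ContinuousOn.intervalIntegrable fun t ht => ?_
  have ht2 : 2 ≤ t := by
    have := ht.1
    exact (le_min hu hv).trans this
  exact ((Real.continuousAt_log (by linarith)).inv₀ (log_ne (by linarith))).continuousWithinAt

lemma LL_hasDeriv {t : ℝ} (ht : 2 < t) : HasDerivAt LL (Real.log t)⁻¹ t := by
  refine intervalIntegral.integral_hasDerivAt_right (LL_ii le_rfl ht.le) ?_ ?_
  · refine ContinuousOn.stronglyMeasurableAtFilter (s := Set.Ioi 2) isOpen_Ioi ?_ t ht
    intro s hs
    have hs' : (2:ℝ) < s := hs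
    exact ((Real.continuousAt_log (by linarith)).inv₀ (log_ne (by linarith))).continuousWithinAt
  · exact (Real.continuousAt_log (by linarith)).inv₀ (log_ne (by linarith))

lemma LL_sub {u v A B : ℝ} (hu : 2 ≤ u) (huv : u ≤ v) (hA : 0 < A) (hAu : A ≤ Real.log u) (hB : Real.log v ≤ B) :
    (v - u) / B ≤ LL v - LL u ∧ LL v - LL u ≤ (v - u) / A := by
  have e : LL v - LL u = ∫ t in u..v, (Real.log t)⁻¹ := by
    rw [LL, LL]
    exact intervalIntegral.integral_interval_sub_left (LL_ii le_rfl (hu.trans huv)) (LL_ii le_rfl hu)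
  rw [e]
  constructor
  · have : (v - u) / B = ∫ t in u..v, B⁻¹ := by
      rw [intervalIntegral.integral_const, smul_eq_mul, div_eq_mul_inv]
    rw [this]
    refine intervalIntegral.integral_mono_on huv (by simp) (LL_ii hu (hu.trans huv)) fun t ht => ?_
    have h1 : Real.log t ≤ Real.log v := Real.log_le_log (by linarith [ht.1]) ht.2
    have h2 : 0 < Real.log t := Real.log_pos (by linarith [ht.1])
    gcongr; linarith
  · have : (v - u) / A = ∫ t in u..v, A⁻¹ := by
      rw [intervalIntegral.integral_const, smul_eq_mul, div_eq_mul_inv]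
    rw [this]
    refine intervalIntegral.integral_mono_on huv (LL_ii hu (hu.trans huv)) (by simp) fun t ht => ?_
    have h1 : Real.log u ≤ Real.log t := Real.log_le_log (by linarith) ht.1
    gcongr; linarith

noncomputable def gg (y r s : ℝ) : ℝ := LL (y^2 / s) - LL (y^2 / (r * s))

/-- basic facts -/
lemma basics {y r : ℝ} (hr : 1 < r) (ha : 2657 ≤ y / r) :
    0 < y ∧ y / r ≤ y ∧ 1 ≤ Real.log (y/r) ∧ Real.log y = Real.log (y/r) + Real.log r ∧
    0 < Real.log r ∧
    (∀ s ∈ Set.Icc (y/r) y, 0 < s ∧ y/r ≤ y^2/(r*s) ∧ y^2/(r*s) ≤ y^2/s ∧ y^2/s ≤ r*y ∧ y ≤ y^2/s ∧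
      y^2/(r*s) ≤ y) := by
  have hr0 : 0 < r := by linarith
  have hy : 0 < y := by
    have : 0 < y / r := by linarith
    exact (div_pos_iff_of_pos_right hr0).1 this
  refine ⟨hy, div_le_self hy.le hr.le, ?_, ?_, Real.log_pos hr, ?_⟩
  · rw [Real.le_log_iff_exp_le (by linarith)]
    have := Real.exp_one_lt_d9
    linarith
  · rw [Real.log_div hy.ne' hr0.ne']; ring
  · rintro s ⟨h1, h2⟩
    have hs : 0 < s := by linarith
    have h3 : y ≤ r * s := by rw [div_le_iff₀ hr0] at h1; linarith
    refine ⟨hs, ?_, ?_, ?_, ?_, ?_⟩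
    · rw [div_le_div_iff₀ hr0 (by positivity)]
      have := mul_le_mul_of_nonneg_left h2 (by positivity : 0 ≤ y * r)
      nlinarith
    · gcongr; nlinarith
    · rw [div_le_iff₀ hs]; nlinarith
    · rw [le_div_iff₀ hs]; nlinarith
    · rw [div_le_iff₀ (by positivity)]; nlinarith

lemma gg_bounds {y r s : ℝ} (hr : 1 < r) (ha : 2657 ≤ y / r) (hs : s ∈ Set.Icc (y/r) y) :
    (y^2 * (1 - 1/r)) / (Real.log y + Real.log r) * s⁻¹ ≤ gg y r s ∧
    gg y r s ≤ (y^2 * (1 - 1/r)) / Real.log (y/r) * s⁻¹ ∧ 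
    0 ≤ gg y r s ∧ gg y r s ≤ y^2 / s / Real.log (y^2/(r*s)) := by
  obtain ⟨hy, hay, hla, hly, hlr, hb⟩ := basics hr ha
  obtain ⟨hs0, h1, h2, h3, h4, h5⟩ := hb s hs
  have hr0 : 0 < r := by linarith
  have hlog : Real.log (y/r) ≤ Real.log (y^2/(r*s)) := Real.log_le_log (by linarith) h1
  have hlog2 : Real.log (y^2/s) ≤ Real.log y + Real.log r := by
    rw [← Real.log_mul hy.ne' hr0.ne', mul_comm]
    exact Real.log_le_log (by positivity) h3
  have k1 := LL_sub (u := y^2/(r*s)) (v := y^2/s) (by linarith) h2 (by linarith) hlog hlog2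
  have k2 := LL_sub (u := y^2/(r*s)) (v := y^2/s) (by linarith) h2 (by linarith) le_rfl hlog2
  have e : y^2/s - y^2/(r*s) = y^2 * (1 - 1/r) * s⁻¹ := by field_simp
  rw [e] at k1
  refine ⟨?_, ?_, ?_, ?_⟩
  · rw [gg]; calc _ = _ := by ring
      _ ≤ _ := k1.1
  · rw [gg]; refine k1.2.trans (le_of_eq (by ring))
  · refine le_trans ?_ k2.1
    exact div_nonneg (by linarith) (by linarith)
  · refine k2.2.trans ?_
    have : 0 < Real.log (y^2/(r*s)) := by linarith
    gcongr
    have : 0 ≤ y^2/(r*s) := by positivity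
    linarith

noncomputable def gg' (y r s : ℝ) : ℝ :=
  (Real.log (y^2/s))⁻¹ * (-(y^2) / s^2) - (Real.log (y^2/(r*s)))⁻¹ * (-(y^2 * r) / (r*s)^2)

lemma gg_hasDeriv {y r s : ℝ} (hr : 1 < r) (ha : 2657 ≤ y / r) (hs : s ∈ Set.Icc (y/r) y) :
    HasDerivAt (gg y r) (gg' y r s) s := by
  obtain ⟨hy, hay, hla, hly, hlr, hb⟩ := basics hr ha
  obtain ⟨hs0, h1, h2, h3, h4, h5⟩ := hb s hs
  have hr0 : 0 < r := by linarith
  have d1 : HasDerivAt (fun s => y^2 / s) (-(y^2)/s^2) s := by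
    have := (hasDerivAt_const s (y^2)).div (hasDerivAt_id s) hs0.ne'
    simp only [id, zero_mul, mul_one, zero_sub] at this
    exact this
  have d2 : HasDerivAt (fun s => y^2 / (r*s)) (-(y^2 * r)/(r*s)^2) s := by
    have := (hasDerivAt_const s (y^2)).div ((hasDerivAt_id s).const_mul r) (by simp only [id]; positivity)
    simp only [id, zero_mul, mul_one, zero_sub] at this
    exact this
  have k1 : HasDerivAt (fun s => LL (y^2/s)) _ s :=
    HasDerivAt.comp (h₂ := LL) (h := fun s => y^2/s) s (LL_hasDeriv (t := y^2/s) (by linarith)) d1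
  have k2 : HasDerivAt (fun s => LL (y^2/(r*s))) _ s :=
    HasDerivAt.comp (h₂ := LL) (h := fun s => y^2/(r*s)) s (LL_hasDeriv (t := y^2/(r*s)) (by linarith)) d2
  exact k1.sub k2

lemma gg'_cont {y r : ℝ} (hr : 1 < r) (ha : 2657 ≤ y / r) : ContinuousOn (gg' y r) (Set.Icc (y/r) y) := by
  obtain ⟨hy, hay, hla, hly, hlr, hb⟩ := basics hr ha
  have hr0 : 0 < r := by linarith
  intro s hs
  obtain ⟨hs0, h1, h2, h3, h4, h5⟩ := hb s hs
  have c1 : ContinuousAt (fun s : ℝ => y^2/s) s := continuousAt_const.div continuousAt_id hs0.ne'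
  have c2 : ContinuousAt (fun s : ℝ => y^2/(r*s)) s :=
    continuousAt_const.div (continuousAt_const.mul continuousAt_id) (by positivity)
  have c3 : ContinuousAt (fun s : ℝ => -(y^2)/s^2) s :=
    continuousAt_const.div (continuousAt_id.pow 2) (pow_ne_zero 2 hs0.ne')
  have c4 : ContinuousAt (fun s : ℝ => -(y^2*r)/(r*s)^2) s :=
    continuousAt_const.div ((continuousAt_const.mul continuousAt_id).pow 2) (pow_ne_zero 2 (mul_pos hr0 hs0).ne')
  have l1 : ContinuousAt (fun s : ℝ => (Real.log (y^2/s))⁻¹) s :=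
    (c1.log (by positivity)).inv₀ (log_ne (by linarith))
  have l2 : ContinuousAt (fun s : ℝ => (Real.log (y^2/(r*s)))⁻¹) s :=
    (c2.log (by positivity)).inv₀ (log_ne (by linarith))
  exact ((l1.mul c3).sub (l2.mul c4)).continuousWithinAt

lemma main_integral {y r : ℝ} (hr : 1 < r) (ha : 2657 ≤ y / r) :
    (y^2 * (1 - 1/r)) * Real.log r / (Real.log y + Real.log r)^2 ≤ ∫ s in (y/r)..y, gg y r s * (Real.log s)⁻¹ ∧
    ∫ s in (y/r)..y, gg y r s * (Real.log s)⁻¹ ≤ (y^2 * (1 - 1/r)) * Real.log r / (Real.log (y/r))^2 := by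
  obtain ⟨hy, hay, hla, hly, hlr, hb⟩ := basics hr ha
  have hr0 : 0 < r := by linarith
  have hi : IntervalIntegrable (fun s => gg y r s * (Real.log s)⁻¹) MeasureTheory.volume (y/r) y := by
    refine ContinuousOn.intervalIntegrable ?_
    rw [Set.uIcc_of_le hay]
    intro s hs
    refine ((gg_hasDeriv hr ha hs).continuousAt.mul ?_).continuousWithinAt
    exact (Real.continuousAt_log (by linarith [hs.1])).inv₀ (log_ne (by linarith [hs.1]))
  have hinv : ∀ c : ℝ, ∫ s in (y/r)..y, c * s⁻¹ = c * Real.log r := by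
    intro c
    rw [intervalIntegral.integral_const_mul, integral_inv_of_pos (by positivity) hy]
    congr 2; field_simp
  have hii : ∀ c : ℝ, IntervalIntegrable (fun s => c * s⁻¹) MeasureTheory.volume (y/r) y := by
    intro c
    refine ContinuousOn.intervalIntegrable ?_
    rw [Set.uIcc_of_le hay]
    exact continuousOn_const.mul (continuousOn_id.inv₀ fun s hs => by simp only [id]; linarith [hs.1])
  have hr1 : 0 ≤ 1 - 1/r := by
    rw [sub_nonneg, div_le_one hr0]; exact hr.le
  constructor
  · have e : (y^2 * (1 - 1/r)) * Real.log r / (Real.log y + Real.log r)^2 =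
      ∫ s in (y/r)..y, ((y^2 * (1 - 1/r)) / (Real.log y + Real.log r)^2) * s⁻¹ := by
      rw [hinv]; ring
    rw [e]
    refine intervalIntegral.integral_mono_on hay (hii _) hi fun s hs => ?_
    have h1 := (gg_bounds hr ha hs).1
    have hs0 : 0 < s := by linarith [hs.1]
    have h2 : Real.log s ≤ Real.log y := Real.log_le_log hs0 hs.2
    have h3 : 0 < Real.log s := Real.log_pos (by linarith [hs.1])
    have h4 : (Real.log y + Real.log r)⁻¹ ≤ (Real.log s)⁻¹ := by gcongr; linarith
    have h5 : 0 < Real.log y + Real.log r := by linarith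
    calc _ = (y^2 * (1 - 1/r)) / (Real.log y + Real.log r) * s⁻¹ * (Real.log y + Real.log r)⁻¹ := by
          field_simp
      _ ≤ _ := mul_le_mul h1 h4 (by positivity) (gg_bounds hr ha hs).2.2.1
  · have e : (y^2 * (1 - 1/r)) * Real.log r / (Real.log (y/r))^2 =
      ∫ s in (y/r)..y, ((y^2 * (1 - 1/r)) / (Real.log (y/r))^2) * s⁻¹ := by
      rw [hinv]; ring
    rw [e]
    refine intervalIntegral.integral_mono_on hay hi (hii _) fun s hs => ?_
    have h1 := (gg_bounds hr ha hs).2.1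
    have hs0 : 0 < s := by linarith [hs.1]
    have h2 : Real.log (y/r) ≤ Real.log s := Real.log_le_log (by linarith) hs.1
    have h4 : (Real.log s)⁻¹ ≤ (Real.log (y/r))⁻¹ := by gcongr
    have h5 : 0 < Real.log (y/r) := by linarith
    have h3 : 0 < Real.log s := by linarith
    calc _ ≤ (y^2 * (1 - 1/r)) / (Real.log (y/r)) * s⁻¹ * (Real.log (y/r))⁻¹ :=
          mul_le_mul h1 h4 (by positivity) (by positivity)
      _ = _ := by
          field_simp

lemma one_add_log_le {r : ℝ} (hr : 1 < r) : 1 + Real.log r ≤ r ∧ 1 + Real.log r ≤ 2 * √r := by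
  have hr0 : 0 < r := by linarith
  have h1 := Real.log_le_sub_one_of_pos hr0
  have h2 := Real.log_le_sub_one_of_pos (Real.sqrt_pos.2 hr0)
  rw [Real.log_sqrt hr0.le] at h2
  constructor <;> linarith

lemma sqrt_ratio {y r : ℝ} (hy : 0 < y) (hr : 0 < r) : y * r * √(y/r) = y * √y * √r := by
  rw [Real.sqrt_div hy.le]
  have : 0 < √r := Real.sqrt_pos.2 hr
  field_simp
  rw [Real.sq_sqrt hr.le]

lemma sum_gg (K : ℝ) (hK : 0 < K) (hpi : ∀ x ≥ (2:ℝ), |piR x - LL x| ≤ K * √x * Real.log x)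
    {y r : ℝ} (hr : 1 < r) (ha : 2657 ≤ y / r) :
    |∑ k ∈ Finset.Ioc ⌊y/r⌋₊ ⌊y⌋₊, gg y r k * pIf (fun _ => 1) k - ∫ s in (y/r)..y, gg y r s * (Real.log s)⁻¹|
      ≤ 7 * K * (y * √y * √r) := by
  obtain ⟨hy, hay, hla, hly, hlr, hb⟩ := basics hr ha
  have hr0 : 0 < r := by linarith
  obtain ⟨hr1, hr2⟩ := one_add_log_le hr
  have hlyle : Real.log y ≤ (1 + Real.log r) * Real.log (y/r) := by nlinarith
  have key := abelGen (a := y/r) (b := y) (by linarith) hay (pIf (fun _ => 1))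
    (f := gg y r) (f' := gg' y r)
    (M := LL) (w := fun t => (Real.log t)⁻¹) (G := fun t => (2 * K * y^2) * t^(-(3/2):ℝ))
    (fun s hs => gg_hasDeriv hr ha hs) (gg'_cont hr ha)
    (fun s hs => LL_hasDeriv (by linarith [hs.1]))
    (fun s hs => ((Real.continuousAt_log (by linarith [hs.1])).inv₀ (log_ne (by linarith [hs.1]))).continuousWithinAt)
    ?_ ?_
  · have e1 : ∫ t in (y/r)..y, (2 * K * y^2) * t^(-(3/2):ℝ) ≤ 4 * K * (y * √y * √r) := by
      rw [intervalIntegral.integral_const_mul, integral_rpow (Or.inr ⟨by norm_num, by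
        rw [Set.uIcc_of_le hay]; intro h; linarith [h.1]⟩)]
      have e2 : (-(3/2) + 1 : ℝ) = -(1/2) := by norm_num
      rw [e2]
      have e3 : (y/r)^(-(1/2):ℝ) = (√(y/r))⁻¹ := by
        rw [Real.rpow_neg (by positivity), Real.sqrt_eq_rpow]
      have e4 : 0 ≤ y^(-(1/2):ℝ) := by positivity
      rw [e3, ← sqrt_ratio hy hr0]
      have e5 : y^2 * (√(y/r))⁻¹ = y * r * √(y/r) := by
        have h0 : 0 < √(y/r) := Real.sqrt_pos.2 (by linarith)
        have h1 : √(y/r) * √(y/r) = y/r := Real.mul_self_sqrt (by positivity)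
        field_simp
        rw [pow_two, h1]; field_simp
      rw [← e5]
      have : 0 ≤ K * y^2 * y^(-(1/2):ℝ) := by positivity
      ring_nf at this ⊢
      linarith
    have b1 : |gg y r y| * |∑ k ∈ Finset.Icc 0 ⌊y⌋₊, pIf (fun _ => 1) k - LL y| ≤ 2 * K * (y * √y * √r) := by
      have hm : y ∈ Set.Icc (y/r) y := ⟨hay, le_rfl⟩
      obtain ⟨-, -, g0, g1⟩ := gg_bounds hr ha hm
      have ey : y^2/(r*y) = y/r := by field_simp
      have ey2 : y^2/y = y := by field_simp
      rw [ey, ey2] at g1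
      rw [abs_of_nonneg g0]
      have := hpi y (by linarith)
      rw [piR] at this
      calc _ ≤ (y / Real.log (y/r)) * (K * √y * Real.log y) := mul_le_mul g1 this (abs_nonneg _) (by positivity)
        _ ≤ (y / Real.log (y/r)) * (K * √y * ((1 + Real.log r) * Real.log (y/r))) := by gcongr
        _ = K * (y * √y * (1 + Real.log r)) := by field_simp
        _ ≤ K * (y * √y * (2 * √r)) := by gcongr
        _ = _ := by ring
    have b2 : |gg y r (y/r)| * |∑ k ∈ Finset.Icc 0 ⌊y/r⌋₊, pIf (fun _ => 1) k - LL (y/r)| ≤ K * (y * √y * √r) := by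
      have hm : y/r ∈ Set.Icc (y/r) y := ⟨le_rfl, hay⟩
      obtain ⟨-, -, g0, g1⟩ := gg_bounds hr ha hm
      have ey : y^2/(r*(y/r)) = y := by field_simp
      have ey2 : y^2/(y/r) = y*r := by field_simp
      rw [ey, ey2] at g1
      rw [abs_of_nonneg g0]
      have := hpi (y/r) (by linarith)
      rw [piR] at this
      have hly0 : 0 < Real.log y := by linarith
      calc _ ≤ (y * r / Real.log y) * (K * √(y/r) * Real.log (y/r)) := mul_le_mul g1 this (abs_nonneg _) (by positivity)
        _ ≤ (y * r / Real.log y) * (K * √(y/r) * Real.log y) := by gcongr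
        _ = K * (y * r * √(y/r)) := by field_simp
        _ = _ := by rw [sqrt_ratio hy hr0]
    linarith
  · refine ContinuousOn.intervalIntegrable ?_
    rw [Set.uIcc_of_le hay]
    refine continuousOn_const.mul (fun t ht => ?_)
    exact (Real.continuousAt_rpow_const t _ (Or.inl (by linarith [ht.1]))).continuousWithinAt
  · intro s hs
    obtain ⟨hs0, h1, h2, h3, h4, h5⟩ := hb s hs
    have hR := hpi s (by linarith [hs.1])
    rw [piR] at hR
    have l0 : 0 < Real.log s := Real.log_pos (by linarith [hs.1])
    have l1 : Real.log s ≤ Real.log (y^2/s) := Real.log_le_log hs0 (hs.2.trans h4)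
    have l2 : Real.log (y/r) ≤ Real.log (y^2/(r*s)) := Real.log_le_log (by linarith) h1
    have l3 : Real.log s ≤ Real.log y := Real.log_le_log hs0 hs.2
    have l4 : Real.log s ≤ r * Real.log (y^2/(r*s)) := by nlinarith
    have p1 : 0 < Real.log (y^2/s) := by linarith
    have p2 : 0 < Real.log (y^2/(r*s)) := by linarith
    have m1 : |gg' y r s| ≤ 2 * (y^2/s^2) * (Real.log s)⁻¹ := by
      rw [gg']
      refine (abs_sub _ _).trans ?_
      have q1 : |(Real.log (y^2/s))⁻¹ * (-(y^2) / s^2)| ≤ (y^2/s^2) * (Real.log s)⁻¹ := by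
        rw [neg_div, mul_neg, abs_neg, abs_of_nonneg (by positivity), mul_comm]
        gcongr
      have q2 : |(Real.log (y^2/(r*s)))⁻¹ * (-(y^2 * r) / (r*s)^2)| ≤ (y^2/s^2) * (Real.log s)⁻¹ := by
        rw [neg_div, mul_neg, abs_neg, abs_of_nonneg (by positivity)]
        calc _ = (y^2/s^2) * (r * Real.log (y^2/(r*s)))⁻¹ := by
              rw [mul_inv]; field_simp
          _ ≤ _ := by gcongr
      linarith
    calc _ ≤ 2 * (y^2/s^2) * (Real.log s)⁻¹ * (K * √s * Real.log s) := mul_le_mul m1 hR (abs_nonneg _) (by positivity)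
      _ = 2 * K * y^2 * (√s / s^2) := by field_simp
      _ = _ := by
        congr 1
        rw [Real.sqrt_eq_rpow, ← Real.rpow_two, ← Real.rpow_sub hs0]; norm_num

lemma NALG_sub_sum (K : ℝ) (hK : 0 < K) (hpi : ∀ x ≥ (2:ℝ), |piR x - LL x| ≤ K * √x * Real.log x)
    {y r : ℝ} (hr : 1 < r) (ha : 2657 ≤ y / r) :
    |(NALG r (y^2) : ℝ) - ∑ k ∈ Finset.Ioc ⌊y/r⌋₊ ⌊y⌋₊, gg y r k * pIf (fun _ => 1) k|
      ≤ 80 * K * (y * √y) := by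
  obtain ⟨hy, hay, hla, hly, hlr, hb⟩ := basics hr ha
  have hr0 : 0 < r := by linarith
  have hly0 : 0 < Real.log y := by linarith
  rw [NALG_eq hr (by positivity), Real.sqrt_sq hy.le, ← Finset.sum_sub_distrib]
  have hterm : ∀ k ∈ Finset.Ioc ⌊y/r⌋₊ ⌊y⌋₊,
      |(piR (y^2/k) - piR (y^2/(r*k))) * pIf (fun _ => 1) k - gg y r k * pIf (fun _ => 1) k|
      ≤ 4 * K * y * Real.log y * pIf (fun k => (k:ℝ)^(-(1/2):ℝ)) k := by
    intro k hk
    rw [Finset.mem_Ioc, Nat.floor_lt (by linarith), Nat.le_floor_iff hy.le] at hk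
    by_cases hp : k.Prime
    · simp only [pIf, hp, if_true, mul_one]
      obtain ⟨hs0, h1, h2, h3, h4, h5⟩ := hb k ⟨hk.1.le, hk.2⟩
      have k1 := hpi (y^2/k) (by linarith)
      have k2 := hpi (y^2/(r*k)) (by linarith)
      have hk1 : (1:ℝ) ≤ k := by linarith [hk.1]
      have l1 : Real.log (y^2/k) ≤ 2 * Real.log y := by
        have : Real.log (y^2/k) ≤ Real.log (y^2) := Real.log_le_log (by positivity) (div_le_self (by positivity) hk1)
        rwa [Real.log_pow] at this
      have l2 : Real.log (y^2/(r*k)) ≤ 2 * Real.log y :=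
        (Real.log_le_log (by positivity) h2).trans l1
      have s1 : √(y^2/k) = y * (k:ℝ)^(-(1/2):ℝ) := by
        rw [Real.sqrt_div (by positivity), Real.sqrt_sq hy.le, Real.rpow_neg hs0.le, Real.sqrt_eq_rpow]; rfl
      have s2 : √(y^2/(r*k)) ≤ y * (k:ℝ)^(-(1/2):ℝ) := by
        rw [← s1]; exact Real.sqrt_le_sqrt h2
      have m1 : K * √(y^2/k) * Real.log (y^2/k) ≤ K * (y * (k:ℝ)^(-(1/2):ℝ)) * (2 * Real.log y) := by
        rw [s1]; gcongr
      have m2 : K * √(y^2/(r*k)) * Real.log (y^2/(r*k)) ≤ K * (y * (k:ℝ)^(-(1/2):ℝ)) * (2 * Real.log y) := by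
        have : 0 ≤ Real.log (y^2/(r*k)) := Real.log_nonneg (by linarith)
        gcongr
      have e : piR (y^2/k) - piR (y^2/(r*k)) - gg y r k = (piR (y^2/k) - LL (y^2/k)) - (piR (y^2/(r*k)) - LL (y^2/(r*k))) := by
        rw [gg]; ring
      rw [e]
      refine (abs_sub _ _).trans ?_
      linarith
    · simp [pIf, hp]
  refine (Finset.abs_sum_le_sum_abs _ _).trans ((Finset.sum_le_sum hterm).trans ?_)
  rw [← Finset.mul_sum]
  have hsub : ∑ k ∈ Finset.Ioc ⌊y/r⌋₊ ⌊y⌋₊, pIf (fun k => (k:ℝ)^(-(1/2):ℝ)) k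
      ≤ ∑ k ∈ Finset.Icc 1 ⌊y⌋₊, pIf (fun k => (k:ℝ)^(-(1/2):ℝ)) k := by
    refine Finset.sum_le_sum_of_subset_of_nonneg ?_ ?_
    · intro k; simp only [Finset.mem_Ioc, Finset.mem_Icc]; omega
    · intro k _ _
      rw [pIf]; split_ifs <;> positivity
  have hfin := sum_prime_sqrt (y := y) (by linarith)
  calc _ ≤ 4 * K * y * Real.log y * ∑ k ∈ Finset.Icc 1 ⌊y⌋₊, pIf (fun k => (k:ℝ)^(-(1/2):ℝ)) k := by gcongr
    _ = 4 * K * y * (Real.log y * ∑ k ∈ Finset.Icc 1 ⌊y⌋₊, pIf (fun k => (k:ℝ)^(-(1/2):ℝ)) k) := by ring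
    _ ≤ 4 * K * y * (20 * √y) := by gcongr
    _ = _ := by ring

/-- Theorem 4.7 of the paper (count of algorithmically inspired RSA integers, under RH). -/
theorem NALG_asymptotics (hRH : RiemannHypothesis) :
    ∃ C : ℝ, 0 < C ∧ ∀ r x : ℝ, 1 < r → 2 * Real.log r < Real.log x →
      (2657 : ℝ) ≤ Real.sqrt x / r →
      ∃ atil ∈ Set.Icc ((1 - 2 * Real.log r / (Real.log x + 2 * Real.log r)) ^ 2)
                       ((1 + 2 * Real.log r / (Real.log x - 2 * Real.log r)) ^ 2),
        |(NALG r x : ℝ)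
            - atil * (4 * x / (Real.log x) ^ 2) * (Real.log r - Real.log r / r)|
          ≤ C * x ^ ((3 : ℝ) / 4) * r ^ ((1 : ℝ) / 2) := by
  obtain ⟨K, hK, hpi⟩ := piR_asymp hRH
  refine ⟨87 * K, by positivity, fun r x hr hlx ha => ?_⟩
  have hr0 : 0 < r := by linarith
  obtain ⟨hy, hay, hla, hly, hlr, hb⟩ := basics hr ha
  have hx : 0 < x := Real.sqrt_pos.1 hy
  have hx2 : (√x)^2 = x := Real.sq_sqrt hx.le
  have h1 := NALG_sub_sum K hK hpi hr ha
  have h2 := sum_gg K hK hpi hr ha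
  have h3 := main_integral hr ha
  set I : ℝ := ∫ s in (√x/r)..√x, gg (√x) r s * (Real.log s)⁻¹ with hI
  rw [hx2] at h1 h3
  have hlsx : Real.log (√x) = Real.log x / 2 := Real.log_sqrt hx.le
  have hlsr : Real.log (√x/r) = Real.log x / 2 - Real.log r := by linarith
  rw [hlsr, hlsx] at h3
  have hL : 0 < Real.log x := by linarith
  set L := Real.log x with hLdef
  set l := Real.log r with hl
  have hr1 : 0 < 1 - 1/r := by
    rw [sub_pos, div_lt_one hr0]; exact hr
  set D : ℝ := (4 * x / L^2) * (l - l/r) with hD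
  have hD' : D = (4 * x / L^2) * l * (1 - 1/r) := by rw [hD]; ring
  have hD0 : 0 < D := by rw [hD']; positivity
  refine ⟨I / D, ⟨?_, ?_⟩, ?_⟩
  · rw [le_div_iff₀ hD0]
    refine le_trans (le_of_eq ?_) h3.1
    rw [hD']
    have n1 : L + 2 * l ≠ 0 := by positivity
    have n2 : L / 2 + l ≠ 0 := by positivity
    have e1 : 1 - 2 * l / (L + 2*l) = L / (L + 2*l) := by field_simp; ring
    have e2 : L / 2 + l = (L + 2*l)/2 := by ring
    rw [e1, e2]
    generalize 1 - 1/r = c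
    field_simp
    ring
  · rw [div_le_iff₀ hD0]
    refine le_trans h3.2 (le_of_eq ?_)
    rw [hD']
    have n1 : L - 2 * l ≠ 0 := by linarith
    have e1 : 1 + 2 * l / (L - 2*l) = L / (L - 2*l) := by field_simp; ring
    have e2 : L / 2 - l = (L - 2*l)/2 := by ring
    rw [e1, e2]
    generalize 1 - 1/r = c
    field_simp
    ring
  · have e : I / D * (4 * x / L^2) * (l - l/r) = I := by
      rw [mul_assoc, ← hD, div_mul_cancel₀ _ hD0.ne']
    rw [e]
    have e2 : x^((3:ℝ)/4) * r^((1:ℝ)/2) = √x * √(√x) * √r := by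
      rw [Real.sqrt_eq_rpow, Real.sqrt_eq_rpow, Real.sqrt_eq_rpow, ← Real.rpow_mul hx.le, ← Real.rpow_add hx]
      norm_num
    rw [mul_assoc, e2]
    have hs : 1 ≤ √r := by rw [Real.one_le_sqrt]; exact hr.le
    have h5 : 80 * K * (√x * √(√x)) ≤ 80 * K * (√x * √(√x) * √r) := by
      exact mul_le_mul_of_nonneg_left (le_mul_of_one_le_right (by positivity) hs) (by positivity)
    have h6 := abs_sub_le (NALG r x : ℝ) (∑ k ∈ Finset.Ioc ⌊√x/r⌋₊ ⌊√x⌋₊, gg (√x) r k * pIf (fun _ => 1) k) I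
    linarith
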